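/- arXiv:math/0604047 — 2 statements merged into one kernel-verified Lean document; each statement's English description precedes it below -/
import Mathlib

section
/- Let X be a compact metric space, let α_1, …, α_d be pairwise commuting homeomorphisms of X, let B be a unital C*-algebra, and let τ be a faithful tracial state on B. Suppose φ : C(X, ℂ) → B is an injective unital *-homomorphism and u_1, …, u_d are unitaries in B such that φ(f ∘ α_j) = u_j* φ(f) u_j for every f ∈ C(X, ℂ) and every j = 1, …, d. Then there exists a strictly positive Borel probability measure μ on X that is invariant under the action of α_1, …, α_d; moreover μ can be chosen so that ∫_X f dμ = τ(φ(f)) for every real-valued f ∈ C(X, ℂ). (This is the necessary direction of the embedding theorem: a covariant embedding of (C(X), α) into an algebra with faithful trace forces a strictly positive invariant measure.) -/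
open MeasureTheory
open scoped ComplexOrder

/-- complexification of a real continuous function -/
noncomputable def cplxMap {X : Type*} [TopologicalSpace X] (f : C(X, ℝ)) : C(X, ℂ) :=
  ⟨fun x => (f x : ℂ), Complex.continuous_ofReal.comp f.continuous⟩

lemma cplxMap_sq_eq {X : Type*} [TopologicalSpace X] (g : C(X, ℝ)) :
    cplxMap (g * g) = star (cplxMap g) * cplxMap g := by
  ext x
  simp [cplxMap]

/-- A covariant embedding of `(C(X), α₁, …, α_d)` into a unital C*-algebra `B` carrying a
faithful tracial state `τ` forces the existence of a strictly positive Borel probability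
measure on `X` invariant under each `α_j`; moreover the measure can be chosen so that
`∫ f dμ = τ(φ f)` for every real-valued continuous `f`. -/
theorem stmt_0 {X : Type*} [MetricSpace X] [CompactSpace X] [MeasurableSpace X] [BorelSpace X]
    {B : Type*} [NormedRing B] [StarRing B] [CStarRing B] [NormedAlgebra ℂ B]
    [StarModule ℂ B] [CompleteSpace B]
    (d : ℕ) (α : Fin d → X ≃ₜ X)
    (hcomm : ∀ i j : Fin d, ∀ x : X, α i (α j x) = α j (α i x))
    (τ : B →ₗ[ℂ] ℂ)
    (hτ1 : τ 1 = 1)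
    (hτpos : ∀ a : B, 0 ≤ τ (star a * a))
    (hτtr : ∀ a b : B, τ (a * b) = τ (b * a))
    (hτfaithful : ∀ a : B, τ (star a * a) = 0 → a = 0)
    (φ : C(X, ℂ) →⋆ₐ[ℂ] B) (hφ : Function.Injective φ)
    (u : Fin d → B) (hu : ∀ j : Fin d, u j ∈ unitary B)
    (hcov : ∀ (j : Fin d) (f : C(X, ℂ)),
      φ (f.comp (α j : C(X, X))) = star (u j) * φ f * u j) :
    ∃ μ : Measure X, IsProbabilityMeasure μ ∧
      (∀ U : Set X, IsOpen U → U.Nonempty → 0 < μ U) ∧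
      (∀ (j : Fin d) (E : Set X), MeasurableSet E → μ ((α j) '' E) = μ E) ∧
      (∀ f : C(X, ℂ), (∀ x : X, (f x).im = 0) → ∫ x, f x ∂μ = τ (φ f)) := by
  have hsq : ∀ g : C(X, ℝ), τ (φ (cplxMap (g * g))) = τ (star (φ (cplxMap g)) * φ (cplxMap g)) := by
    intro g
    rw [cplxMap_sq_eq, map_mul, map_star]
  have hadd : ∀ f g : C(X, ℝ), τ (φ (cplxMap (f + g))) = τ (φ (cplxMap f)) + τ (φ (cplxMap g)) := by
    intro f g
    rw [← map_add, ← map_add]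
    congr 2
    ext x
    simp [cplxMap]
  have hsmul : ∀ (c : ℝ) (f : C(X, ℝ)), τ (φ (cplxMap (c • f))) = (c : ℂ) * τ (φ (cplxMap f)) := by
    intro c f
    rw [← smul_eq_mul, ← map_smul, ← map_smul]
    congr 2
    ext x
    simp [cplxMap]
  have hpos : ∀ f : C(X, ℝ), (∀ x, 0 ≤ f x) → 0 ≤ τ (φ (cplxMap f)) := by
    intro f hf
    let g : C(X, ℝ) := ⟨fun x => Real.sqrt (f x), Real.continuous_sqrt.comp f.continuous⟩
    have hg : f = g * g := by
      ext x
      simp [g, Real.mul_self_sqrt (hf x)]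
    rw [hg, hsq]
    exact hτpos _
  have hreal : ∀ f : C(X, ℝ), (τ (φ (cplxMap f))).im = 0 := by
    intro f
    have h1 := hpos (f ⊔ 0) (fun x => by simp)
    have h2 := hpos ((-f) ⊔ 0) (fun x => by simp)
    have h3 : (f ⊔ 0) = f + ((-f) ⊔ 0) := by
      ext x
      simp only [ContinuousMap.sup_apply, ContinuousMap.add_apply, ContinuousMap.neg_apply,
        ContinuousMap.zero_apply]
      rcases le_total (f x) 0 with h | h
      · rw [sup_eq_right.2 h, sup_eq_left.2 (by linarith)]; ring
      · rw [sup_eq_left.2 h, sup_eq_right.2 (by linarith)]; ring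
    rw [h3, hadd] at h1
    have e1 := (Complex.le_def.1 h1).2
    have e2 := (Complex.le_def.1 h2).2
    simp only [Complex.zero_im, Complex.add_im] at e1 e2
    linarith
  let L : CompactlySupportedContinuousMap X ℝ →ₗ[ℝ] ℝ :=
    { toFun := fun f => (τ (φ (cplxMap f.toContinuousMap))).re
      map_add' := fun f g => by
        rw [← Complex.add_re, ← hadd]
        rfl
      map_smul' := fun c f => by
        have : (c • f).toContinuousMap = c • f.toContinuousMap := rfl
        rw [this, hsmul]
        simp }
  let Λ : CompactlySupportedContinuousMap X ℝ →ₚ[ℝ] ℝ := PositiveLinearMap.mk₀ L (fun f hf => by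
    have := hpos f.toContinuousMap (fun x => hf x)
    exact (Complex.le_def.1 this).1)
  let μ := RealRMK.rieszMeasure Λ
  have hint : ∀ f : C(X, ℝ), ((∫ x, f x ∂μ : ℝ) : ℂ) = τ (φ (cplxMap f)) := by
    intro f
    have h := RealRMK.integral_rieszMeasure Λ
      (⟨f, HasCompactSupport.of_compactSpace f⟩ : CompactlySupportedContinuousMap X ℝ)
    have h' : ∫ x, f x ∂μ = (τ (φ (cplxMap f))).re := h
    apply Complex.ext
    · simpa using h'
    · simp [hreal]
  have hfin : IsFiniteMeasure μ := inferInstanceAs (IsFiniteMeasure (RealRMK.rieszMeasure Λ))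
  refine ⟨μ, ?_, ?_, ?_, ?_⟩
  · have h := hint 1
    have h1 : cplxMap (1 : C(X, ℝ)) = 1 := by ext x; simp [cplxMap]
    rw [h1, map_one, hτ1] at h
    have h2 : μ.real Set.univ = 1 := by
      have : ∫ x, (1 : C(X, ℝ)) x ∂μ = 1 := by exact_mod_cast h
      simpa using this
    constructor
    rw [measureReal_def] at h2
    rwa [ENNReal.toReal_eq_one_iff] at h2
  · intro U hU hne
    obtain ⟨x, hx⟩ := hne
    rw [pos_iff_ne_zero]
    intro h0
    obtain ⟨f, hf0, hf1, -⟩ := exists_continuous_zero_one_of_isClosed hU.isClosed_compl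
      (isClosed_singleton (x := x)) (by simpa using hx)
    have hz : ∫ y, (f * f) y ∂μ = 0 := by
      apply integral_eq_zero_of_ae
      have : ∀ᵐ y ∂μ, y ∉ U := measure_eq_zero_iff_ae_notMem.1 h0
      filter_upwards [this] with y hy
      have := hf0 hy
      simp at this
      simp [this]
    have h := hint (f * f)
    rw [hz, hsq] at h
    have h2 := hτfaithful _ (by simpa using h.symm)
    have h3 : cplxMap f = 0 := hφ (by rw [h2, map_zero])
    have h4 := congrArg (fun g : C(X, ℂ) => g x) h3
    have h5 : f x = 1 := hf1 rfl
    simp [cplxMap, h5] at h4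
  · intro j E hE
    have hm : μ.map (α j) = μ := by
      apply ext_of_forall_integral_eq_of_IsFiniteMeasure
      intro f
      rw [integral_map (α j).continuous.measurable.aemeasurable
        f.continuous.aestronglyMeasurable]
      have h1 := hint f.toContinuousMap
      have h2 := hint (f.toContinuousMap.comp (α j : C(X, X)))
      have h3 : cplxMap (f.toContinuousMap.comp (α j : C(X, X)))
        = (cplxMap f.toContinuousMap).comp (α j : C(X, X)) := rfl
      rw [h3, hcov, hτtr, ← mul_assoc, (Unitary.mem_iff.1 (hu j)).2, one_mul, ← h1] at h2
      exact_mod_cast h2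
    have hE' : MeasurableSet ((α j) '' E) := (α j).toMeasurableEquiv.measurableSet_image.2 hE
    conv_lhs => rw [← hm]
    rw [Measure.map_apply (α j).continuous.measurable hE', (α j).injective.preimage_image]
  · intro f hf
    let g : C(X, ℝ) := ⟨fun x => (f x).re, Complex.continuous_re.comp f.continuous⟩
    have hg : cplxMap g = f := by
      ext x
      apply Complex.ext
      · simp [cplxMap, g]
      · simp [cplxMap, hf x]
    have h := hint g
    rw [hg, ← integral_complex_ofReal] at h
    rw [← h]
    refine integral_congr_ae (Filter.Eventually.of_forall fun x => ?_)
    exact (congrArg (fun k : C(X, ℂ) => k x) hg).symm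
end

section
/- Let A be a unital separable C*-algebra. If there exists an injective *-homomorphism from A into a unital simple AF-algebra, then there exists an injective *-homomorphism from A into a unital simple AF-algebra that has exactly one tracial state. -/
open scoped ComplexOrder

/-- A bundled unital C*-algebra. -/
structure UnitalCStarAlg where
  carrier : Type
  [normedRing : NormedRing carrier]
  [starRing : StarRing carrier]
  [cstarRing : CStarRing carrier]
  [normedAlgebra : NormedAlgebra ℂ carrier]
  [starModule : StarModule ℂ carrier]
  [completeSpace : CompleteSpace carrier]

attribute [instance] UnitalCStarAlg.normedRing UnitalCStarAlg.starRing
  UnitalCStarAlg.cstarRing UnitalCStarAlg.normedAlgebra UnitalCStarAlg.starModule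
  UnitalCStarAlg.completeSpace

/-- A unital C*-algebra is AF if it has an increasing sequence of finite-dimensional
*-subalgebras (each containing the unit) with dense union. -/
def UnitalCStarAlg.IsAF (B : UnitalCStarAlg) : Prop :=
  ∃ S : ℕ → StarSubalgebra ℂ B.carrier,
    Monotone S ∧ (∀ n, FiniteDimensional ℂ (S n)) ∧ Dense (⋃ n, (S n : Set B.carrier))

/-- A unital C*-algebra is simple if its only closed two-sided ideals are `{0}` and the
whole algebra. -/
def UnitalCStarAlg.IsSimple (B : UnitalCStarAlg) : Prop :=
  ∀ I : TwoSidedIdeal B.carrier, IsClosed (I : Set B.carrier) → I = ⊥ ∨ I = ⊤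

/-- A tracial state on a unital C*-algebra: a linear functional `τ` with `τ 1 = 1`,
`τ (a* a) ≥ 0` and `τ (a b) = τ (b a)`. -/
def UnitalCStarAlg.IsTracialState (B : UnitalCStarAlg) (τ : B.carrier →ₗ[ℂ] ℂ) : Prop :=
  τ 1 = 1 ∧ (∀ a : B.carrier, 0 ≤ τ (star a * a)) ∧
    ∀ a b : B.carrier, τ (a * b) = τ (b * a)

section Part1
open scoped ComplexOrder

theorem fin_char {D : Type} [CommCStarAlgebra D] [FiniteDimensional ℂ D] :
    Finite (WeakDual.characterSpace ℂ D) := by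
  have h1 := linearIndependent_monoidHom D ℂ
  let g : WeakDual.characterSpace ℂ D → Module.Dual ℂ D := fun χ =>
    ((WeakDual.CharacterSpace.toAlgHom χ).toLinearMap)
  have : LinearIndependent ℂ g := by
    let e : Module.Dual ℂ D →ₗ[ℂ] (D → ℂ) :=
      { toFun := fun f x => f x, map_add' := fun _ _ => rfl, map_smul' := fun _ _ => rfl }
    apply LinearIndependent.of_comp e
    let m : WeakDual.characterSpace ℂ D → (D →* ℂ) := fun χ =>
      ((WeakDual.CharacterSpace.toAlgHom χ : D →ₐ[ℂ] ℂ) : D →* ℂ)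
    have hm : Function.Injective m := by
      intro a b hab
      apply WeakDual.CharacterSpace.ext
      intro x
      exact DFunLike.congr_fun hab x
    exact h1.comp m hm
  exact this.finite

theorem comm_proj {D : Type} [CommCStarAlgebra D] [FiniteDimensional ℂ D] :
    ∃ (n : ℕ) (p : Fin n → D), (∀ i, star (p i) = p i) ∧ (∀ i j, p i * p j = if i = j then p i else 0)
      ∧ ∑ i, p i = 1 ∧ (∀ i, p i ≠ 0) ∧ ∀ i x, ∃ c : ℂ, p i * x = c • p i := by
  classical
  have := fin_char (D := D)
  have := Fintype.ofFinite (WeakDual.characterSpace ℂ D)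
  let e := Fintype.equivFin (WeakDual.characterSpace ℂ D)
  let G := gelfandStarTransform D
  let δ : WeakDual.characterSpace ℂ D → C(WeakDual.characterSpace ℂ D, ℂ) := fun χ =>
    ⟨fun y => if y = χ then 1 else 0, continuous_of_discreteTopology⟩
  have hG : ∀ f, G (G.symm f) = f := fun f => G.apply_symm_apply f
  refine ⟨_, fun i => G.symm (δ (e.symm i)), ?_, ?_, ?_, ?_, ?_⟩
  · intro i
    rw [← map_star]; congr 1; ext y; simp [δ]
  · intro i j
    rw [← map_mul]
    split_ifs with h
    · subst h; congr 1; ext y; simp [δ]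
    · rw [← map_zero G.symm]; congr 1; ext y; simp [δ]
      intro h1 h2; exact h (e.symm.injective (h2 ▸ h1 ▸ rfl))
  · rw [← map_sum, ← map_one G.symm]; congr 1; ext y
    simp [δ, ContinuousMap.sum_apply]
    rw [Finset.card_eq_one]
    refine ⟨e y, ?_⟩
    ext b
    simp [Equiv.eq_symm_apply, eq_comm]
  · intro i h
    have h := congrArg G h
    rw [hG, map_zero] at h
    have := DFunLike.congr_fun h (e.symm i)
    simp [δ] at this
  · intro i x
    refine ⟨G x (e.symm i), ?_⟩
    have hinj : Function.Injective G := EquivLike.injective G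
    apply hinj
    rw [map_mul, map_smul, hG]
    ext y; simp [δ]
    split_ifs with h
    · rw [h]
    · rfl

theorem masa_proj {F : Type} [CStarAlgebra F] [FiniteDimensional ℂ F] :
    ∃ (n : ℕ) (p : Fin n → F), (∀ i, star (p i) = p i) ∧ (∀ i j, p i * p j = if i = j then p i else 0)
      ∧ ∑ i, p i = 1 ∧ (∀ i, p i ≠ 0) ∧ ∀ i x, ∃ c : ℂ, p i * x * p i = c • p i := by
  classical
  let P : ℕ → Prop := fun d => ∃ D : StarSubalgebra ℂ F, (∀ x ∈ D, ∀ y ∈ D, x * y = y * x) ∧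
    Module.finrank ℂ D = d
  have hP : ∃ d, P d := ⟨_, ⊥, by
    intro x hx y hy
    obtain ⟨c, rfl⟩ := StarSubalgebra.mem_bot.1 hx
    exact Algebra.commutes c y, rfl⟩
  have hb : ∀ d, P d → d ≤ Module.finrank ℂ F := by
    rintro d ⟨D, -, rfl⟩
    exact Submodule.finrank_le (Subalgebra.toSubmodule D.toSubalgebra)
  obtain ⟨d, ⟨D, hD, hd⟩, hmax⟩ : ∃ d, P d ∧ ∀ d', P d' → d' ≤ d := by
    refine ⟨Nat.findGreatest P (Module.finrank ℂ F), ?_, ?_⟩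
    · obtain ⟨d, hd⟩ := hP
      exact Nat.findGreatest_spec (hb d hd) hd
    · intro d' hd'
      exact Nat.le_findGreatest (hb d' hd') hd'
  have key : ∀ y : F, star y = y → (∀ x ∈ D, x * y = y * x) → y ∈ D := by
    intro y hy hc
    let D' := StarAlgebra.adjoin ℂ ((D : Set F) ∪ {y})
    have hcomm : ∀ x ∈ D', ∀ z ∈ D', x * z = z * x := by
      have h1 : ∀ a ∈ (D : Set F) ∪ {y}, ∀ b ∈ (D : Set F) ∪ {y}, a * b = b * a := by
        rintro a (ha | ha) b (hb | hb)
        · exact hD a ha b hb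
        · rw [hb]; exact hc a ha
        · rw [ha]; exact (hc b hb).symm
        · rw [ha, hb]
      have h2 : ∀ a ∈ (D : Set F) ∪ {y}, ∀ b ∈ (D : Set F) ∪ {y}, a * star b = star b * a := by
        intro a ha b hb
        apply h1 a ha
        rcases hb with hb | hb
        · exact Or.inl (star_mem (s := D) hb)
        · right; rw [hb]; exact hy
      have inst := StarAlgebra.isMulCommutative_adjoin ℂ h1 h2
      intro x hx z hz
      have := inst.is_comm.comm ⟨x, hx⟩ ⟨z, hz⟩
      exact congrArg Subtype.val this
    have hle : D ≤ D' := fun x hx => StarAlgebra.subset_adjoin ℂ _ (Or.inl hx)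
    have h3 : Module.finrank ℂ D' ≤ Module.finrank ℂ D := by
      rw [hd]; exact hmax _ ⟨D', hcomm, rfl⟩
    have h4 : Subalgebra.toSubmodule D.toSubalgebra = Subalgebra.toSubmodule D'.toSubalgebra :=
      Submodule.eq_of_le_of_finrank_le (fun x hx => hle hx) h3
    have h5 : y ∈ Subalgebra.toSubmodule D'.toSubalgebra :=
      StarAlgebra.subset_adjoin ℂ _ (Or.inr rfl)
    rw [← h4] at h5
    exact h5
  have fdD : FiniteDimensional ℂ D := inferInstanceAs (FiniteDimensional ℂ (Subalgebra.toSubmodule D.toSubalgebra))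
  have cl : CompleteSpace D := FiniteDimensional.complete ℂ D
  let instD : CommCStarAlgebra D :=
    { (inferInstance : NormedRing D), (inferInstance : StarRing D), (inferInstance : NormedAlgebra ℂ D),
      (inferInstance : CStarRing D), (inferInstance : StarModule ℂ D), cl with
      mul_comm := fun x y => Subtype.ext (hD x x.2 y y.2) }
  obtain ⟨n, p, h1, h2, h3, h4, h5⟩ := comm_proj (D := D)
  have h2' : ∀ i j, (p i : F) * (p j : F) = if i = j then (p i : F) else 0 := by
    intro i j
    have := congrArg Subtype.val (h2 i j)
    rw [apply_ite Subtype.val] at this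
    exact this
  have hsa : ∀ i, star (p i : F) = p i := fun i => congrArg Subtype.val (h1 i)
  have hx1 : ∀ i (x : F), star x = x → ∃ c : ℂ, (p i : F) * x * (p i : F) = c • (p i : F) := by
    intro i x hx
    have hmem : (p i : F) * x * (p i : F) ∈ D := by
      apply key
      · simp [hsa, hx, mul_assoc]
      · intro z hz
        obtain ⟨c, hc⟩ := h5 i ⟨z, hz⟩
        have hc : (p i : F) * z = c • (p i : F) := congrArg Subtype.val hc
        have hc' : z * (p i : F) = c • (p i : F) := by rw [hD z hz _ (p i).2, hc]
        rw [← mul_assoc, ← mul_assoc, hc', mul_assoc _ _ z, hc]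
        simp
    obtain ⟨c, hc⟩ := h5 i ⟨_, hmem⟩
    refine ⟨c, ?_⟩
    have hc : (p i : F) * ((p i : F) * x * (p i : F)) = c • (p i : F) := congrArg Subtype.val hc
    rw [← hc, ← mul_assoc, ← mul_assoc, h2']; simp
  refine ⟨n, fun i => p i, hsa, h2', ?_, ?_, ?_⟩
  · have := congrArg Subtype.val h3
    rw [AddSubmonoidClass.coe_finsetSum] at this
    exact this
  · intro i h; exact h4 i (Subtype.ext h)
  · intro i x
    obtain ⟨a, ha⟩ := hx1 i (realPart x : F) (realPart x).2
    obtain ⟨b, hb⟩ := hx1 i (imaginaryPart x : F) (imaginaryPart x).2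
    refine ⟨a + Complex.I * b, ?_⟩
    conv_lhs => rw [← realPart_add_I_smul_imaginaryPart x]
    rw [mul_add, add_mul, ha, mul_smul_comm, smul_mul_assoc, hb, add_smul, mul_smul]

end Part1

section Part2
open scoped ComplexOrder
open scoped Matrix.Norms.L2Operator

/-- partial isometry relation -/
def PIso {F : Type} [CStarAlgebra F] (p q v : F) : Prop :=
  star v * v = q ∧ v * star v = p ∧ p * v = v ∧ v * q = v

theorem piso_exists {F : Type} [CStarAlgebra F] {p q x : F} (hp : star p = p) (hq : star q = q)
    (hpp : p * p = p) (hqq : q * q = q) (hpx : ∀ x, ∃ c : ℂ, p * x * p = c • p)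
    (hqx : ∀ x, ∃ c : ℂ, q * x * q = c • q) (hx : p * x * q ≠ 0) : ∃ v, PIso p q v := by
  let := CStarAlgebra.spectralOrder F
  have := CStarAlgebra.spectralOrderedRing F
  set z := p * x * q with hz
  have hpz : p * z = z := by rw [hz, ← mul_assoc, ← mul_assoc, hpp]
  have hzq : z * q = z := by rw [hz, mul_assoc, hqq]
  have hqz : q * star z = star z := by rw [← hq, ← star_mul, hzq]
  have hzp : star z * p = star z := by rw [← hp, ← star_mul, hpz]
  clear_value z
  clear hz
  obtain ⟨c, hc⟩ := hqx (star z * z)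
  obtain ⟨c', hc'⟩ := hpx (z * star z)
  have hc : star z * z = c • q := by
    rw [← hc, ← mul_assoc, hqz, mul_assoc, hzq]
  have hc' : z * star z = c' • p := by
    rw [← hc', ← mul_assoc, hpz, mul_assoc, hzp]
  have hcc : c = c' := by
    have h1 : z * star z * z = c • z := by rw [mul_assoc, hc, mul_smul_comm, hzq]
    rw [hc', smul_mul_assoc, hpz] at h1
    exact (smul_left_injective ℂ hx h1).symm
  subst hcc
  have hzz : star z * z ≠ 0 := by
    intro h; exact hx (CStarRing.star_mul_self_eq_zero_iff z |>.1 h)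
  have hq0 : q ≠ 0 := by rintro h; apply hzz; rw [hc, h, smul_zero]
  have hreal : star c = c := by
    have h1 : star (star z * z) = star z * z := by simp
    rw [hc, star_smul, hq] at h1
    exact smul_left_injective ℂ hq0 h1
  obtain ⟨r, rfl⟩ : ∃ r : ℝ, c = r := ⟨c.re, (Complex.conj_eq_iff_re.1 hreal).symm⟩
  have hqpos : 0 ≤ q := by
    have := star_mul_self_nonneg q
    rwa [hq, hqq] at this
  have hr : 0 < r := by
    by_contra hr
    push Not at hr
    apply hzz
    apply le_antisymm _ (star_mul_self_nonneg z)
    rw [hc]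
    have : (0:F) ≤ ((-r : ℝ)) • q := smul_nonneg (by linarith) hqpos
    rw [← neg_nonneg]
    convert this using 1
    rw [neg_smul]; rfl
  have hs : ((Real.sqrt r : ℝ) : ℂ)⁻¹ * ((Real.sqrt r : ℝ) : ℂ)⁻¹ * r = 1 := by
    norm_cast
    have : Real.sqrt r ≠ 0 := (Real.sqrt_pos.2 hr).ne'
    field_simp
    rw [Real.sq_sqrt hr.le]
  have hst : star (((Real.sqrt r : ℝ) : ℂ)⁻¹) = ((Real.sqrt r : ℝ) : ℂ)⁻¹ := by
    rw [star_inv₀]; congr 1; exact Complex.conj_ofReal _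
  refine ⟨((Real.sqrt r : ℝ) : ℂ)⁻¹ • z, ?_, ?_, ?_, ?_⟩
  · rw [star_smul, hst, smul_mul_smul_comm, hc, smul_smul, hs, one_smul]
  · rw [star_smul, hst, smul_mul_smul_comm, hc', smul_smul, hs, one_smul]
  · rw [mul_smul_comm, hpz]
  · rw [smul_mul_assoc, hzq]

theorem munits {F : Type} [CStarAlgebra F] [FiniteDimensional ℂ F] :
    ∃ (k : ℕ) (κ : Fin k → ℕ) (P : Fin k → F) (v : ∀ l, Fin (κ l) → F),
      (∀ l, 0 < κ l) ∧ (∀ l, P l ≠ 0) ∧ (∀ l x, ∃ c : ℂ, P l * x * P l = c • P l) ∧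
      (∀ l, star (P l) = P l) ∧ (∀ l, P l * P l = P l) ∧ (∀ l a, v l a * P l = v l a) ∧
      (∀ l a b, star (v l a) * v l b = if a = b then P l else 0) ∧
      (∀ l m, l ≠ m → ∀ a b x, star (v l a) * x * v m b = 0) ∧
      ∑ l, ∑ a, v l a * star (v l a) = 1 := by
  classical
  obtain ⟨n, p, h1, h2, h3, h4, h5⟩ := masa_proj (F := F)
  have hpp : ∀ i, p i * p i = p i := fun i => by simp [h2]
  let s : Setoid (Fin n) :=
    { r := fun i j => ∃ v, PIso (p i) (p j) v
      iseqv := by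
        refine ⟨fun i => ⟨p i, by simp [PIso, h1, h2]⟩, ?_, ?_⟩
        · rintro i j ⟨v, a, b, c, d⟩
          refine ⟨star v, by simpa using b, by simpa using a, ?_, ?_⟩
          · rw [← h1 j, ← star_mul, d]
          · rw [← h1 i, ← star_mul, c]
        · rintro i j m ⟨v, a, b, c, d⟩ ⟨w, a', b', c', d'⟩
          refine ⟨v * w, ?_, ?_, ?_, ?_⟩
          · rw [star_mul, mul_assoc, ← mul_assoc (star v), a, c', a']
          · rw [star_mul, mul_assoc, ← mul_assoc w, b', ← mul_assoc, d, b]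
          · rw [← mul_assoc, c]
          · rw [mul_assoc, d'] }
  let e := Fintype.equivFin (Quotient s)
  let cl : Fin n → Fin (Fintype.card (Quotient s)) := fun i => e ⟦i⟧
  let rep : Fin (Fintype.card (Quotient s)) → Fin n := fun l => (e.symm l).out
  have hrep : ∀ i, ∃ v, PIso (p i) (p (rep (cl i))) v := by
    intro i
    have : s.r (rep (cl i)) i := by
      have := Quotient.mk_out (s := s) i
      simpa [rep, cl] using this
    exact s.symm this
  choose w hw using hrep
  let f : ∀ l, {i // cl i = l} ≃ Fin (Fintype.card {i // cl i = l}) := fun l => Fintype.equivFin _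
  refine ⟨_, fun l => Fintype.card {i // cl i = l}, fun l => p (rep l), fun l a => w ((f l).symm a), ?_, fun l => h4 _,
    fun l x => h5 _ x, fun l => h1 _, fun l => hpp _, ?_, ?_, ?_, ?_⟩
  · intro l
    apply Fintype.card_pos_iff.2
    exact ⟨rep l, by simp [cl, rep]⟩
  · intro l a
    have := (hw ((f l).symm a)).2.2.2
    rwa [((f l).symm a).2] at this
  · intro l a b
    split_ifs with h
    · subst h
      have := (hw ((f l).symm a)).1
      rwa [((f l).symm a).2] at this
    · have ha := (hw ((f l).symm a)).2.2.1
      have hb := (hw ((f l).symm b)).2.2.1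
      beta_reduce
      rw [← ha, ← hb, star_mul, h1, mul_assoc, ← mul_assoc (p _), h2, if_neg]
      · simp
      · intro hab
        exact h ((f l).symm.injective (Subtype.ext hab))
  · intro l m hlm a b x
    have ha := (hw ((f l).symm a)).2.2.1
    have hb := (hw ((f m).symm b)).2.2.1
    beta_reduce
    rw [← ha, ← hb, star_mul, h1]
    suffices h : p ((f l).symm a) * x * p ((f m).symm b) = 0 by
      calc _ = star (w ((f l).symm a)) * (p ((f l).symm a) * x * p ((f m).symm b)) * w ((f m).symm b) := by
            simp only [mul_assoc]
        _ = 0 := by rw [h]; simp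
    by_contra hne
    obtain ⟨v, hv⟩ := piso_exists (h1 _) (h1 _) (hpp _) (hpp _) (h5 _) (h5 _) hne
    have : s.r ((f l).symm a) ((f m).symm b) := ⟨v, hv⟩
    apply hlm
    rw [← ((f l).symm a).2, ← ((f m).symm b).2]
    exact congrArg e (Quotient.sound this)
  · have : ∀ l, ∑ a, w ((f l).symm a) * star (w ((f l).symm a)) = ∑ i : {i // cl i = l}, p i := by
      intro l
      rw [← Equiv.sum_comp (f l).symm (fun i : {i // cl i = l} => p i)]
      exact Finset.sum_congr rfl fun a _ => (hw _).2.1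
    simp only [this]
    rw [← h3]
    exact Fintype.sum_fiberwise cl p

abbrev MA {k : ℕ} (κ : Fin k → ℕ) := ∀ l, Matrix (Fin (κ l)) (Fin (κ l)) ℂ

theorem wedder (F : Type) [CStarAlgebra F] [FiniteDimensional ℂ F] :
    ∃ (k : ℕ) (κ : Fin k → ℕ), (∀ l, 0 < κ l) ∧ Nonempty (F ≃⋆ₐ[ℂ] MA κ) := by
  classical
  obtain ⟨k, κ, P, v, h0, hP, hc, hs, hi, hv, h1, h2, h3⟩ := munits (F := F)
  have hPv : ∀ l a, P l * star (v l a) = star (v l a) := by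
    intro l a; rw [← hs l, ← star_mul, hv]
  have hc' : ∀ l a b x, ∃ c : ℂ, star (v l a) * x * v l b = c • P l := by
    intro l a b x
    obtain ⟨c, hc⟩ := hc l (star (v l a) * x * v l b)
    refine ⟨c, ?_⟩
    rw [← hc, ← mul_assoc, ← mul_assoc, hPv, mul_assoc _ _ (P l), hv]
  choose c hcc using hc'
  have uniq : ∀ l (a b : ℂ), a • P l = b • P l → a = b := fun l a b h => smul_left_injective ℂ (hP l) h
  have hexp : ∀ l a b x y, star (v l a) * (x * y) * v l b =
      ∑ d, (star (v l a) * x * v l d) * (star (v l d) * y * v l b) := by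
    intro l a b x y
    have : star (v l a) * (x * y) * v l b = star (v l a) * x * (∑ m, ∑ d, v m d * star (v m d)) * y * v l b := by
      rw [h3]; simp [mul_assoc]
    rw [this, Finset.mul_sum, Finset.sum_mul, Finset.sum_mul, Finset.sum_eq_single l]
    · rw [Finset.mul_sum, Finset.sum_mul, Finset.sum_mul]
      refine Finset.sum_congr rfl fun d _ => ?_
      simp only [mul_assoc]
    · intro m _ hm
      rw [Finset.mul_sum, Finset.sum_mul, Finset.sum_mul]
      refine Finset.sum_eq_zero fun d _ => ?_
      rw [← mul_assoc, h2 l m hm.symm]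
      simp
    · simp
  let Φ : F →⋆ₐ[ℂ] MA κ :=
    { toFun := fun x l => Matrix.of fun a b => c l a b x
      map_one' := by
        ext l a b
        apply uniq l
        simp only [Matrix.of_apply]
        rw [← hcc, mul_one, h1, Pi.one_apply, Matrix.one_apply]
        split_ifs <;> simp
      map_mul' := by
        intro x y
        ext l a b
        apply uniq l
        simp only [Matrix.of_apply, Pi.mul_apply, Matrix.mul_apply]
        rw [← hcc, hexp, Finset.sum_smul]
        refine Finset.sum_congr rfl fun d _ => ?_
        rw [hcc, hcc, smul_mul_smul_comm, hi]
      map_zero' := by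
        ext l a b
        apply uniq l
        simp only [Matrix.of_apply]
        rw [← hcc]; simp
      map_add' := by
        intro x y
        ext l a b
        apply uniq l
        simp only [Matrix.of_apply, Pi.add_apply, Matrix.add_apply]
        rw [← hcc, add_smul, ← hcc, ← hcc, mul_add, add_mul]
      commutes' := by
        intro r
        ext l a b
        apply uniq l
        simp only [Matrix.of_apply]
        rw [← hcc, Algebra.algebraMap_eq_smul_one, Algebra.algebraMap_eq_smul_one, mul_smul_comm, smul_mul_assoc,
          mul_one, h1, Pi.smul_apply, Matrix.smul_apply, Pi.one_apply, Matrix.one_apply]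
        split_ifs <;> simp
      map_star' := by
        intro x
        ext l a b
        apply uniq l
        simp only [Matrix.of_apply, Pi.star_apply, Matrix.star_apply]
        rw [← hcc]
        have := congrArg star (hcc l b a x)
        rw [star_smul, hs] at this
        rw [← this]
        simp [mul_assoc] }
  refine ⟨k, κ, h0, ⟨StarAlgEquiv.ofBijective Φ ⟨?_, ?_⟩⟩⟩
  · rw [injective_iff_map_eq_zero]
    intro x hx
    have hx' : ∀ l a b, c l a b x = 0 := fun l a b => congrFun (congrFun (congrFun hx l) a) b
    have : x = (∑ l, ∑ a, v l a * star (v l a)) * x * (∑ l, ∑ a, v l a * star (v l a)) := by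
      rw [h3]; simp
    rw [this]
    simp only [Finset.sum_mul, Finset.mul_sum]
    refine Finset.sum_eq_zero fun l _ => Finset.sum_eq_zero fun a _ => Finset.sum_eq_zero fun m _ =>
      Finset.sum_eq_zero fun b _ => ?_
    calc _ = v m b * (star (v m b) * x * v l a) * star (v l a) := by simp only [mul_assoc]
      _ = 0 := by
        by_cases h : m = l
        · subst h; rw [hcc, hx']; simp
        · rw [h2 m l h]; simp
  · intro M
    refine ⟨∑ l, ∑ a, ∑ b, M l a b • (v l a * star (v l b)), ?_⟩
    ext l a b
    apply uniq l
    change c l a b _ • P l = _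
    rw [← hcc, Finset.mul_sum, Finset.sum_mul, Finset.sum_eq_single l]
    · simp only [Finset.sum_mul, Finset.mul_sum, mul_smul_comm, smul_mul_assoc]
      have : ∀ d g, star (v l a) * (v l d * star (v l g)) * v l b
          = if a = d then (if g = b then P l else 0) else 0 := by
        intro d g
        rw [← mul_assoc, h1, mul_assoc, h1]
        split_ifs <;> simp [hi]
      simp [this]
    · intro m _ hm
      simp only [Finset.sum_mul, Finset.mul_sum, mul_smul_comm, smul_mul_assoc]
      refine Finset.sum_eq_zero fun d _ => Finset.sum_eq_zero fun g _ => ?_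
      have := h2 l m hm.symm a d 1
      rw [mul_one] at this
      rw [← mul_assoc, this]; simp
    · simp

end Part2

section Part3
open scoped ComplexOrder
open scoped Matrix.Norms.L2Operator

theorem proj_diag {N : ℕ} (p : Matrix (Fin N) (Fin N) ℂ) (hs : star p = p) (hi : p * p = p) :
    ∃ (U : Matrix (Fin N) (Fin N) ℂ) (s : Finset (Fin N)), star U * U = 1 ∧ U * star U = 1 ∧
      p = U * Matrix.diagonal (fun i => if i ∈ s then 1 else 0) * star U ∧ p.trace = s.card := by
  classical
  have hA : p.IsHermitian := hs
  have h1 := hA.spectral_theorem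
  rw [Unitary.conjStarAlgAut_apply] at h1
  set U : Matrix (Fin N) (Fin N) ℂ := Subtype.val hA.eigenvectorUnitary with hU
  have hUU : star U * U = 1 := Unitary.coe_star_mul_self hA.eigenvectorUnitary
  have hUU' : U * star U = 1 := Unitary.coe_mul_star_self hA.eigenvectorUnitary
  set D := Matrix.diagonal ((RCLike.ofReal : ℝ → ℂ) ∘ hA.eigenvalues) with hD
  have hDp : D = star U * p * U := by
    rw [h1]
    calc D = (star U * U) * D * (star U * U) := by rw [hUU]; simp
      _ = _ := by simp only [mul_assoc]
  have hDD : D * D = D := by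
    rw [hDp]
    calc _ = star U * p * (U * star U) * p * U := by simp only [mul_assoc]
      _ = star U * (p * p) * U := by rw [hUU']; simp [mul_assoc]
      _ = _ := by rw [hi]
  have hev : ∀ i, ((hA.eigenvalues i : ℝ) : ℂ) = if i ∈ Finset.univ.filter (fun i => hA.eigenvalues i = 1) then 1 else 0 := by
    intro i
    have := congrFun (congrFun hDD i) i
    simp only [hD, Matrix.diagonal_mul_diagonal, Matrix.diagonal_apply_eq, Function.comp] at this
    have h3 : hA.eigenvalues i * hA.eigenvalues i = hA.eigenvalues i := by exact_mod_cast this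
    have h4 : hA.eigenvalues i = 0 ∨ hA.eigenvalues i = 1 := by
      have : hA.eigenvalues i * (hA.eigenvalues i - 1) = 0 := by linarith
      rcases mul_eq_zero.1 this with h | h
      · left; exact h
      · right; linarith
    rcases h4 with h | h <;> simp [h]
  have hDe : D = Matrix.diagonal (fun i => if i ∈ Finset.univ.filter (fun i => hA.eigenvalues i = 1) then 1 else 0) := by
    rw [hD]; congr 1; ext i; exact hev i
  refine ⟨U, Finset.univ.filter (fun i => hA.eigenvalues i = 1), hUU, hUU', ?_, ?_⟩
  · rw [← hDe]; exact h1
  · have : p.trace = D.trace := by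
      rw [hDp, Matrix.trace_mul_comm, ← mul_assoc, hUU', one_mul]
    rw [this, hDe, Matrix.trace_diagonal]
    simp

theorem proj_equiv {N : ℕ} (p q : Matrix (Fin N) (Fin N) ℂ) (hs : star p = p) (hi : p * p = p)
    (hs' : star q = q) (hi' : q * q = q) (ht : p.trace = q.trace) : ∃ w, PIso q p w := by
  classical
  obtain ⟨U, s, h1, h2, h3, h4⟩ := proj_diag p hs hi
  obtain ⟨V, t, k1, k2, k3, k4⟩ := proj_diag q hs' hi'
  have hc : s.card = t.card := by rw [h4, k4] at ht; exact_mod_cast ht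
  let e : s ≃ t := Finset.equivOfCardEq hc
  let S : Matrix (Fin N) (Fin N) ℂ := Matrix.of fun i j => if h : j ∈ s then (if (e ⟨j, h⟩ : Fin N) = i then 1 else 0) else 0
  have hS1 : star S * S = Matrix.diagonal (fun i => if i ∈ s then 1 else 0) := by
    ext i j
    simp only [Matrix.mul_apply, Matrix.star_apply, S, Matrix.of_apply, Matrix.diagonal_apply]
    by_cases hi : i ∈ s
    · by_cases hj : j ∈ s
      · simp only [hi, hj, dif_pos]
        rw [Finset.sum_eq_single (e ⟨i, hi⟩ : Fin N)]
        · by_cases hij : i = j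
          · subst hij; simp
          · have : (e ⟨j, hj⟩ : Fin N) ≠ e ⟨i, hi⟩ := by
              intro h; apply hij
              have := e.injective (Subtype.ext h)
              simpa using this.symm
            simp [hij, this]
        · intro b _ hb; simp [hb.symm]
        · simp
      · have : i ≠ j := by rintro rfl; exact hj hi
        simp [hj, this]
    · simp [hi]
  have hS2 : S * star S = Matrix.diagonal (fun i => if i ∈ t then 1 else 0) := by
    ext i j
    simp only [Matrix.mul_apply, Matrix.star_apply, S, Matrix.of_apply, Matrix.diagonal_apply]
    by_cases hi : i ∈ t
    · rw [Finset.sum_eq_single (e.symm ⟨i, hi⟩ : Fin N)]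
      · by_cases hij : i = j
        · subst hij; simp [hi]
        · simp [hij]
      · intro b _ hb
        by_cases hbs : b ∈ s
        · have : (e ⟨b, hbs⟩ : Fin N) ≠ i := by
            intro h; apply hb
            have : e ⟨b, hbs⟩ = ⟨i, hi⟩ := Subtype.ext h
            rw [← this]; simp
          simp [this]
        · simp [hbs]
      · simp
    · simp only [hi, if_false, ite_self]
      refine Finset.sum_eq_zero fun b _ => ?_
      by_cases hbs : b ∈ s
      · have : (e ⟨b, hbs⟩ : Fin N) ≠ i := by
          rintro rfl; exact hi (e ⟨b, hbs⟩).2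
        simp [this]
      · simp [hbs]
  have hw1 : star (V * S * star U) * (V * S * star U) = p := by
    calc _ = U * (star S * (star V * V) * S) * star U := by simp [mul_assoc]
      _ = p := by rw [k1, mul_one, hS1, h3]
  have hw2 : (V * S * star U) * star (V * S * star U) = q := by
    calc _ = V * (S * (star U * U) * star S) * star V := by simp [mul_assoc]
      _ = q := by rw [h1, mul_one, hS2, k3]
  set w := V * S * star U
  have hwp : w * p = w := by
    rw [← sub_eq_zero, ← CStarRing.star_mul_self_eq_zero_iff]
    calc _ = p * (star w * w) * p - p * (star w * w) - (star w * w) * p + star w * w := by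
          simp only [star_sub, star_mul, hs]; noncomm_ring
      _ = 0 := by rw [hw1]; simp [hi]
  refine ⟨w, hw1, hw2, ?_, hwp⟩
  rw [← hw2, mul_assoc, hw1, hwp]

/-- matrix units -/
def EE {k : ℕ} {κ : Fin k → ℕ} (l : Fin k) (a b : Fin (κ l)) : MA κ := Pi.single l (Matrix.single a b 1)

theorem EE_mul {k : ℕ} {κ : Fin k → ℕ} (l : Fin k) (a b c d : Fin (κ l)) :
    (EE l a b * EE l c d : MA κ) = if b = c then EE l a d else 0 := by
  unfold EE
  rw [← Pi.single_mul]
  split_ifs with h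
  · subst h; simp
  · rw [Matrix.single_mul_single_of_ne _ _ _ _ h]; simp

theorem EE_mul_ne {k : ℕ} {κ : Fin k → ℕ} (l m : Fin k) (h : l ≠ m) (a b : Fin (κ l)) (c d : Fin (κ m)) :
    (EE l a b * EE m c d : MA κ) = 0 := by
  unfold EE
  ext i : 1
  by_cases hi : i = l
  · subst hi; simp [Pi.single_eq_of_ne h]
  · simp [Pi.single_eq_of_ne hi]

theorem EE_star {k : ℕ} {κ : Fin k → ℕ} (l : Fin k) (a b : Fin (κ l)) :
    star (EE l a b : MA κ) = EE l b a := by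
  unfold EE
  rw [← Pi.single_star]
  simp [Matrix.star_eq_conjTranspose]

theorem EE_sum {k : ℕ} {κ : Fin k → ℕ} (x : MA κ) : x = ∑ l, ∑ a, ∑ b, x l a b • EE l a b := by
  ext m i j
  rw [Finset.sum_apply, Matrix.sum_apply, Finset.sum_eq_single m]
  · simp [EE, Matrix.sum_apply, Finset.sum_apply, Matrix.single_apply, ite_and]
  · intro l _ hl
    simp [EE, Finset.sum_apply, Pi.single_eq_of_ne hl.symm]
  · simp

theorem EE_one {k : ℕ} {κ : Fin k → ℕ} : ∑ l, ∑ a, (EE l a a : MA κ) = 1 := by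
  conv_rhs => rw [EE_sum (1 : MA κ)]
  simp [Matrix.one_apply]

theorem rep_equiv {k : ℕ} {κ : Fin k → ℕ} (h0 : ∀ l, 0 < κ l) {N : ℕ}
    (π π' : MA κ →⋆ₐ[ℂ] Matrix (Fin N) (Fin N) ℂ)
    (ht : ∀ x, (π x).trace = (π' x).trace) :
    ∃ U : Matrix (Fin N) (Fin N) ℂ, star U * U = 1 ∧ U * star U = 1 ∧ ∀ x, U * π x * star U = π' x := by
  classical
  have hw : ∀ l, ∃ w, PIso (π' (EE l ⟨0, h0 l⟩ ⟨0, h0 l⟩)) (π (EE l ⟨0, h0 l⟩ ⟨0, h0 l⟩)) w := by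
    intro l
    apply proj_equiv
    · rw [← map_star, EE_star]
    · rw [← map_mul, EE_mul]; simp
    · rw [← map_star, EE_star]
    · rw [← map_mul, EE_mul]; simp
    · exact ht _
  choose w hw using hw
  let U := ∑ l, ∑ a, π' (EE l a ⟨0, h0 l⟩) * w l * π (EE l ⟨0, h0 l⟩ a)
  have hUs : star U = ∑ l, ∑ a, π (EE l a ⟨0, h0 l⟩) * star (w l) * π' (EE l ⟨0, h0 l⟩ a) := by
    simp only [U, star_sum, star_mul, ← map_star, EE_star, mul_assoc]
  have hUE : ∀ l a b, U * π (EE l a b) = π' (EE l a ⟨0, h0 l⟩) * w l * π (EE l ⟨0, h0 l⟩ b) := by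
    intro l a b
    simp only [U, Finset.sum_mul]
    rw [Finset.sum_eq_single l, Finset.sum_eq_single a]
    · rw [mul_assoc, ← map_mul, EE_mul]; simp
    · intro c _ hc
      rw [mul_assoc, ← map_mul, EE_mul]; simp [hc]
    · simp
    · intro m _ hm
      refine Finset.sum_eq_zero fun c _ => ?_
      rw [mul_assoc, ← map_mul, EE_mul_ne _ _ hm]; simp
    · simp
  have hEU : ∀ l a b, π' (EE l a b) * U = π' (EE l a ⟨0, h0 l⟩) * w l * π (EE l ⟨0, h0 l⟩ b) := by
    intro l a b
    simp only [U, Finset.mul_sum]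
    rw [Finset.sum_eq_single l, Finset.sum_eq_single b]
    · rw [← mul_assoc, ← mul_assoc, ← map_mul, EE_mul]; simp
    · intro c _ hc
      rw [← mul_assoc, ← mul_assoc, ← map_mul, EE_mul]; simp [hc.symm]
    · simp
    · intro m _ hm
      refine Finset.sum_eq_zero fun c _ => ?_
      rw [← mul_assoc, ← mul_assoc, ← map_mul, EE_mul_ne _ _ hm.symm]; simp
    · simp
  have hUU : star U * U = 1 := by
    rw [hUs]
    simp only [Finset.sum_mul]
    have : ∀ l a, π (EE l a ⟨0, h0 l⟩) * star (w l) * π' (EE l ⟨0, h0 l⟩ a) * U = π (EE l a a) := by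
      intro l a
      rw [mul_assoc, hEU]
      calc _ = π (EE l a ⟨0, h0 l⟩) * (star (w l) * (π' (EE l ⟨0, h0 l⟩ ⟨0, h0 l⟩) * w l)) * π (EE l ⟨0, h0 l⟩ a) := by
            simp only [mul_assoc]
        _ = _ := by
            rw [(hw l).2.2.1, (hw l).1, ← map_mul, ← map_mul, EE_mul, if_pos rfl, EE_mul, if_pos rfl]
    simp only [this]
    rw [← map_one π, ← EE_one, map_sum]
    simp only [map_sum]
  have hUU' : U * star U = 1 := mul_eq_one_comm.1 hUU
  refine ⟨U, hUU, hUU', fun x => ?_⟩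
  have : U * π x = π' x * U := by
    rw [EE_sum x]
    simp only [map_sum, map_smul, Finset.mul_sum, Finset.sum_mul, mul_smul_comm, smul_mul_assoc, hUE, hEU]
  rw [this, mul_assoc, hUU', mul_one]

theorem mult_rep {k : ℕ} (κ : Fin k → ℕ) (N : Fin k → ℕ) (n : ℕ) (hn : n = ∑ l, N l * κ l) :
    ∃ μ : MA κ →⋆ₐ[ℂ] Matrix (Fin n) (Fin n) ℂ, ∀ x, (μ x).trace = ∑ l, (N l : ℂ) * (x l).trace := by
  classical
  have hcard : Fintype.card (Σ l, Fin (κ l) × Fin (N l)) = n := by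
    simp [Fintype.card_sigma, hn, mul_comm]
  let e := Fintype.equivFinOfCardEq hcard
  let R := Matrix.reindexAlgEquiv ℂ ℂ e
  let b : MA κ → Matrix (Σ l, Fin (κ l) × Fin (N l)) (Σ l, Fin (κ l) × Fin (N l)) ℂ := fun x =>
    Matrix.blockDiagonal' fun l => Matrix.blockDiagonal fun _ : Fin (N l) => x l
  have b1 : b 1 = 1 := by
    have : (fun l => Matrix.blockDiagonal fun _ : Fin (N l) => (1 : MA κ) l) = 1 := by
      ext1 l; exact Matrix.blockDiagonal_one
    simp only [b]; rw [this, Matrix.blockDiagonal'_one]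
  have badd : ∀ x y, b (x + y) = b x + b y := by
    intro x y
    simp only [b]; rw [← Matrix.blockDiagonal'_add]; congr 1; ext1 l
    exact Matrix.blockDiagonal_add _ _
  have bmul : ∀ x y, b (x * y) = b x * b y := by
    intro x y
    simp only [b]; rw [← Matrix.blockDiagonal'_mul]; congr 1; ext1 l
    exact Matrix.blockDiagonal_mul _ _
  have bsmul : ∀ (c : ℂ) x, b (c • x) = c • b x := by
    intro c x
    simp only [b]; rw [← Matrix.blockDiagonal'_smul]; congr 1; ext1 l
    exact Matrix.blockDiagonal_smul _ _
  have bstar : ∀ x, b (star x) = star (b x) := by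
    intro x
    simp only [b]; rw [Matrix.star_eq_conjTranspose, Matrix.blockDiagonal'_conjTranspose]; congr 1; ext1 l
    rw [Matrix.blockDiagonal_conjTranspose]; rfl
  let μ : MA κ →⋆ₐ[ℂ] Matrix (Fin n) (Fin n) ℂ :=
    { toFun := fun x => R (b x)
      map_one' := by rw [b1, map_one]
      map_mul' := fun x y => by rw [bmul, map_mul]
      map_zero' := by
        have := bsmul 0 0
        rw [zero_smul, zero_smul] at this
        rw [this, map_zero]
      map_add' := fun x y => by rw [badd, map_add]
      commutes' := fun c => by
        rw [Algebra.algebraMap_eq_smul_one, bsmul, b1, map_smul, map_one, Algebra.algebraMap_eq_smul_one]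
      map_star' := fun x => by
        rw [bstar]; rfl }
  refine ⟨μ, fun x => ?_⟩
  have h1 : (μ x).trace = (b x).trace := by
    change (R (b x)).trace = _
    simp only [Matrix.trace, R, Matrix.coe_reindexAlgEquiv, Matrix.diag_apply, Matrix.reindex_apply, Matrix.submatrix_apply]
    exact Equiv.sum_comp e.symm (fun i => b x i i)
  rw [h1]
  simp only [b]
  rw [Matrix.trace_blockDiagonal']
  refine Finset.sum_congr rfl fun l _ => ?_
  rw [Matrix.trace_blockDiagonal]
  simp

end Part3

section Part4

theorem denom_exists {α : Type} [Fintype α] (F : α → ℚ) (hF : ∀ i, 0 < F i) :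
    ∃ (D : ℕ) (N : α → ℕ), 0 < D ∧ ∀ i, (N i : ℚ) = D * F i := by
  classical
  have hd : ∀ i, (F i).den ∣ ∏ j, (F j).den := fun i => Finset.dvd_prod_of_mem _ (Finset.mem_univ i)
  choose c hc using hd
  refine ⟨∏ j, (F j).den, fun i => c i * (F i).num.toNat, Finset.prod_pos fun i _ => (F i).den_pos, fun i => ?_⟩
  have h1 : ((F i).num.toNat : ℚ) = (F i).num := by
    have := Int.toNat_of_nonneg (Rat.num_pos.2 (hF i)).le
    exact_mod_cast this
  have h2 : ((F i).num : ℚ) = (F i).den * F i := by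
    rw [mul_comm]; exact (Rat.mul_den_eq_num (F i)).symm
  rw [hc i]
  push_cast
  rw [h1, h2]; ring

theorem comb {ι : Type} [Fintype ι] (t : ι → ℝ) (ht : ∀ i, 0 < t i) (ε : ℝ) (hε : 0 < ε) :
    ∃ (d : ℕ) (r : Fin d → ℝ) (N : ι → Fin d → ℕ) (D : ℝ), 0 < D ∧ (∀ m, 0 < r m) ∧
      LinearIndependent ℚ r ∧ (∀ i m, 0 < N i m) ∧ (∀ i, t i = ∑ m, N i m * r m) ∧
      ∀ i m, |N i m - D * t i| ≤ ε * (D * t i) := by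
  classical
  obtain ⟨bs, hbs, hspan, hli⟩ := exists_linearIndependent ℚ (Set.range t)
  have hfin : bs.Finite := (Set.finite_range t).subset hbs
  have := hfin.fintype
  let e := Fintype.equivFin bs
  obtain ⟨d, hd⟩ : ∃ d, d = Fintype.card bs := ⟨_, rfl⟩
  rw [← hd] at e
  let b : Fin d → ℝ := fun a => (e.symm a : ℝ)
  have hb : ∀ a, 0 < b a := by
    intro a
    obtain ⟨i, hi⟩ := hbs (e.symm a).2
    change 0 < ((e.symm a : bs) : ℝ)
    rw [← hi]; exact ht i
  have hbli : LinearIndependent ℚ b := hli.comp e.symm e.symm.injective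
  have hbr : Set.range b = bs := by
    have : b = Subtype.val ∘ e.symm := rfl
    rw [this, Set.range_comp, e.symm.range_eq_univ]; simp
  have hA : ∀ i, ∃ A : Fin d → ℚ, ∑ a, A a • b a = t i := by
    intro i
    rw [← Submodule.mem_span_range_iff_exists_fun, hbr, hspan]
    exact Submodule.subset_span ⟨i, rfl⟩
  choose A hA using hA
  obtain ⟨η, hη0, hη⟩ : ∃ η > 0, ∀ i, (∑ a, |(A i a : ℝ)|) * η ≤ min ε (1/2) * t i := by
    have h1 : ∀ i, ∀ᶠ η in nhdsWithin (0:ℝ) (Set.Ioi 0), (∑ a, |(A i a : ℝ)|) * η ≤ min ε (1/2) * t i := by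
      intro i
      have h2 : Filter.Tendsto (fun η : ℝ => (∑ a, |(A i a : ℝ)|) * η) (nhdsWithin (0:ℝ) (Set.Ioi 0)) (nhds 0) := by
        have : Filter.Tendsto (fun η : ℝ => (∑ a, |(A i a : ℝ)|) * η) (nhds 0) (nhds ((∑ a, |(A i a : ℝ)|) * 0)) :=
          (continuous_const.mul continuous_id).tendsto 0
        rw [mul_zero] at this
        exact this.mono_left nhdsWithin_le_nhds
      have h3 : 0 < min ε (1/2) * t i := mul_pos (lt_min hε (by norm_num)) (ht i)
      exact (h2.eventually (gt_mem_nhds h3)).mono fun _ h => h.le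
    have h4 := (Filter.eventually_all.2 h1).and self_mem_nhdsWithin
    obtain ⟨η, h5, h6⟩ := h4.exists
    exact ⟨η, h6, h5⟩
  obtain ⟨δ, hδ0, hδη⟩ : ∃ δ : ℚ, (0:ℝ) < δ ∧ (δ : ℝ) < η / 2 := exists_rat_btwn (by linarith)
  let θ : ℝ := δ / (d + 1)
  have hθ0 : 0 < θ := by positivity
  have hθd : d * θ < δ := by
    have : (d + 1) * θ = δ := by simp only [θ]; field_simp
    linarith
  have hθδ : θ ≤ δ := div_le_self hδ0.le (by linarith [Nat.cast_nonneg (α := ℝ) d])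
  have hq : ∀ a, ∃ q : ℚ, b a - θ < q ∧ (q : ℝ) < b a := fun a => exists_rat_btwn (by linarith)
  choose q hq1 hq2 using hq
  have hSq : ∑ a, b a - d * θ ≤ ∑ a, (q a : ℝ) := by
    have : ∑ a, (b a - θ) ≤ ∑ a, (q a : ℝ) := Finset.sum_le_sum fun a _ => (hq1 a).le
    simpa [Finset.sum_sub_distrib] using this
  have hSb : 0 ≤ ∑ a, b a := Finset.sum_nonneg fun a _ => (hb a).le
  have hpos : 0 < δ + ∑ a, (q a : ℝ) := by linarith
  let s : ℝ := (∑ a, b a) / (δ + ∑ a, (q a : ℝ))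
  have hs : s * (δ + ∑ a, (q a : ℝ)) = ∑ a, b a := div_mul_cancel₀ _ hpos.ne'
  let c : Fin d → ℝ := fun a => (b a - s * q a) / δ
  have hc : ∀ a, 0 < c a := by
    intro a
    apply div_pos _ hδ0
    have h1 : 0 < (b a - s * q a) * (δ + ∑ a, (q a : ℝ)) := by
      have : (b a - s * q a) * (δ + ∑ a, (q a : ℝ)) = b a * (δ + ∑ a, (q a : ℝ)) - q a * ∑ a, b a := by
        rw [← hs]; ring
      rw [this]
      have h2 : (q a : ℝ) * ∑ a, b a ≤ b a * ∑ a, b a := mul_le_mul_of_nonneg_right (hq2 a).le hSb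
      have h3 : b a * (δ + ∑ a, (q a : ℝ)) > b a * ∑ a, b a := mul_lt_mul_of_pos_left (by linarith) (hb a)
      linarith
    exact pos_of_mul_pos_left h1 hpos.le
  have hcs : ∑ a, c a = s := by
    simp only [c]
    rw [← Finset.sum_div, Finset.sum_sub_distrib, ← Finset.mul_sum, ← hs]
    field_simp; ring
  let f : Fin d → Fin d → ℚ := fun m a => q a + if a = m then δ else 0
  have hbf : ∀ a, b a = ∑ m, c m * f m a := by
    intro a
    simp only [f]
    push_cast
    simp only [mul_add, Finset.sum_add_distrib, ← Finset.sum_mul, hcs]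
    have : ∑ m, c m * ((if a = m then δ else 0 : ℚ) : ℝ) = c a * δ := by
      rw [Finset.sum_eq_single a] <;> simp +contextual
      intro m hm; right; intro h; exact absurd h.symm hm
    rw [this]
    simp only [c]; field_simp; ring
  have hfb : ∀ m a, |(f m a : ℝ) - b a| ≤ η := by
    intro m a
    simp only [f]
    have h1 := hq1 a; have h2 := hq2 a
    rw [abs_le]
    split_ifs <;> push_cast <;> constructor <;> linarith
  let F : ι × Fin d → ℚ := fun p => ∑ a, A p.1 a * f p.2 a
  have hF : ∀ i m, |(F (i, m) : ℝ) - t i| ≤ min ε (1/2) * t i := by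
    intro i m
    refine le_trans ?_ (hη i)
    rw [← hA i]
    simp only [F]
    push_cast
    simp only [Rat.smul_def, ← Finset.sum_sub_distrib, ← mul_sub]
    refine (Finset.abs_sum_le_sum_abs _ _).trans ?_
    rw [Finset.sum_mul]
    refine Finset.sum_le_sum fun a _ => ?_
    rw [abs_mul]
    exact mul_le_mul_of_nonneg_left (hfb m a) (abs_nonneg _)
  have hFpos : ∀ p, 0 < F p := by
    rintro ⟨i, m⟩
    have h1 := (abs_le.1 (hF i m)).1
    have h2 : min ε (1/2) * t i ≤ 1/2 * t i := mul_le_mul_of_nonneg_right (min_le_right _ _) (ht i).le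
    have h3 := ht i
    have : (0:ℝ) < F (i, m) := by linarith
    exact_mod_cast this
  obtain ⟨D, N, hD, hN⟩ := denom_exists F hFpos
  have hDR : (0:ℝ) < D := by exact_mod_cast hD
  have hN' : ∀ i m, (N (i, m) : ℝ) = D * F (i, m) := by
    intro i m; exact_mod_cast hN (i, m)
  refine ⟨d, fun m => c m / D, fun i m => N (i, m), D, hDR, fun m => div_pos (hc m) hDR, ?_, ?_, ?_, ?_⟩
  · rw [linearIndependent_iff_card_le_finrank_span]
    have h1 : Submodule.span ℚ (Set.range b) ≤ Submodule.span ℚ (Set.range fun m => c m / (D : ℝ)) := by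
      rw [Submodule.span_le]
      rintro _ ⟨a, rfl⟩
      rw [SetLike.mem_coe, Submodule.mem_span_range_iff_exists_fun]
      refine ⟨fun m => D * f m a, ?_⟩
      rw [hbf a]
      refine Finset.sum_congr rfl fun m _ => ?_
      rw [Rat.smul_def]; push_cast; field_simp
    have h2 := finrank_span_eq_card hbli
    have : FiniteDimensional ℚ (Submodule.span ℚ (Set.range fun m => c m / (D : ℝ))) :=
      FiniteDimensional.span_of_finite ℚ (Set.finite_range _)
    have h3 := Submodule.finrank_mono h1
    rw [h2] at h3
    exact h3
  · intro i m
    have : (0:ℝ) < N (i, m) := by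
      rw [hN']; exact mul_pos hDR (by exact_mod_cast hFpos (i, m))
    exact_mod_cast this
  · intro i
    have : ∀ m, (N (i, m) : ℝ) * (c m / D) = ∑ a, (A i a : ℝ) * (c m * f m a) := by
      intro m
      rw [hN']
      simp only [F]; push_cast
      field_simp
      rw [Finset.sum_mul]
      refine Finset.sum_congr rfl fun a _ => ?_
      ring
    simp only [this]
    rw [Finset.sum_comm, ← hA i]
    refine Finset.sum_congr rfl fun a _ => ?_
    rw [← Finset.mul_sum, ← hbf, Rat.smul_def]
  · intro i m
    rw [hN', ← mul_sub, abs_mul, abs_of_pos hDR]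
    have := (hF i m).trans (mul_le_mul_of_nonneg_right (min_le_left _ _) (ht i).le)
    nlinarith [mul_le_mul_of_nonneg_left this hDR.le]

end Part4

section Part5
open scoped ComplexOrder
open scoped Matrix.Norms.L2Operator

/-- weighted trace -/
noncomputable def ctr {k : ℕ} {κ : Fin k → ℕ} (w : Fin k → ℂ) : MA κ →ₗ[ℂ] ℂ where
  toFun x := ∑ l, w l * (x l).trace
  map_add' x y := by simp [mul_add, Finset.sum_add_distrib]
  map_smul' c x := by
    simp only [Pi.smul_apply, Matrix.trace_smul, smul_eq_mul, RingHom.id_apply, Finset.mul_sum]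
    exact Finset.sum_congr rfl fun _ _ => by ring

theorem ctr_apply {k : ℕ} {κ : Fin k → ℕ} (w : Fin k → ℂ) (x : MA κ) :
    ctr w x = ∑ l, w l * (x l).trace := rfl

theorem ctr_comm {k : ℕ} {κ : Fin k → ℕ} (w : Fin k → ℂ) (x y : MA κ) :
    ctr w (x * y) = ctr w (y * x) := by
  simp only [ctr_apply, Pi.mul_apply]
  exact Finset.sum_congr rfl fun l _ => by rw [Matrix.trace_mul_comm]

theorem EE_trace {k : ℕ} {κ : Fin k → ℕ} (l m : Fin k) (a : Fin (κ l)) :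
    ((EE l a a : MA κ) m).trace = if l = m then 1 else 0 := by
  unfold EE
  by_cases h : l = m
  · subst h; simp
  · rw [Pi.single_eq_of_ne (Ne.symm h)]; simp [h]

theorem ctr_EE {k : ℕ} {κ : Fin k → ℕ} (w : Fin k → ℂ) (l : Fin k) (a : Fin (κ l)) :
    ctr w (EE l a a : MA κ) = w l := by
  simp [ctr_apply, EE_trace]

theorem tracial_form {k : ℕ} {κ : Fin k → ℕ} (h0 : ∀ l, 0 < κ l) (f : MA κ →ₗ[ℂ] ℂ)
    (hf : ∀ x y, f (x * y) = f (y * x)) :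
    f = ctr (fun l => f (EE l ⟨0, h0 l⟩ ⟨0, h0 l⟩)) := by
  have h1 : ∀ l (a b : Fin (κ l)), f (EE l a b) = if a = b then f (EE l ⟨0, h0 l⟩ ⟨0, h0 l⟩) else 0 := by
    intro l a b
    have e1 := EE_mul l a ⟨0, h0 l⟩ ⟨0, h0 l⟩ b
    have e2 := EE_mul l ⟨0, h0 l⟩ b a ⟨0, h0 l⟩
    rw [if_pos rfl] at e1
    rw [← e1, hf, e2]
    by_cases h : a = b
    · subst h; simp
    · rw [if_neg h, if_neg (Ne.symm h), map_zero]
  obtain ⟨w, hw⟩ : ∃ w, w = (fun l => f (EE l ⟨0, h0 l⟩ ⟨0, h0 l⟩)) := ⟨_, rfl⟩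
  have h1 : ∀ l (a b : Fin (κ l)), f (EE l a b) = if a = b then w l else 0 := by rw [hw]; exact h1
  rw [← hw]
  refine LinearMap.ext fun x => ?_
  conv_lhs => rw [EE_sum x]
  rw [ctr_apply]
  simp only [map_sum, map_smul, h1, smul_eq_mul, mul_ite, mul_zero, Finset.sum_ite_eq,
    Finset.mem_univ, if_true, Matrix.trace, Matrix.diag]
  refine Finset.sum_congr rfl fun l _ => ?_
  rw [Finset.mul_sum]
  exact Finset.sum_congr rfl fun a _ => mul_comm _ _

theorem EE_proj {k : ℕ} {κ : Fin k → ℕ} (l : Fin k) (a : Fin (κ l)) :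
    star (EE l a a : MA κ) = EE l a a ∧ (EE l a a : MA κ) * EE l a a = EE l a a :=
  ⟨EE_star l a a, by rw [EE_mul, if_pos rfl]⟩

theorem step {k k' kc : ℕ} {κ : Fin k → ℕ} {κ' : Fin k' → ℕ} {c : Fin kc → ℕ}
    (h0 : ∀ l, 0 < κ l) (hc : ∀ l, 0 < c l)
    (hkc : 0 < kc)
    (i : MA κ →⋆ₐ[ℂ] MA κ') (φ : MA κ →⋆ₐ[ℂ] MA c) (s : Fin k' → ℝ) (hs : ∀ l, 0 < s l)
    (r : Fin kc → ℝ) (hr : ∀ l, 0 < r l)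
    (hcomp : ∀ x, ctr (fun l => (r l : ℂ)) (φ x) = ctr (fun l => (s l : ℂ)) (i x))
    (ε : ℝ) (hε : 0 < ε) :
    ∃ (k2 : ℕ) (c2 : Fin k2 → ℕ) (r2 : Fin k2 → ℝ) (φ' : MA κ' →⋆ₐ[ℂ] MA c2)
      (ψ : MA c →⋆ₐ[ℂ] MA c2) (N : Fin kc → Fin k2 → ℕ) (D : ℝ),
      (∀ l, 0 < c2 l) ∧ (∀ l, 0 < r2 l) ∧ (∀ x, φ' (i x) = ψ (φ x)) ∧
      (∀ x, ctr (fun l => (r2 l : ℂ)) (φ' x) = ctr (fun l => (s l : ℂ)) x) ∧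
      (∀ x, ctr (fun l => (r2 l : ℂ)) (ψ x) = ctr (fun l => (r l : ℂ)) x) ∧
      (∀ x m, (ψ x m).trace = ∑ l, (N l m : ℂ) * (x l).trace) ∧
      (∀ l m, 0 < N l m) ∧ 0 < D ∧ ∀ l m, |N l m - D * r l| ≤ ε * (D * r l) := by
  classical
  obtain ⟨d, r2, N, D, hD, hr2, hli, hN, ht, hND⟩ := comb (Sum.elim r s)
    (by rintro (l | l); exacts [hr l, hs l]) ε hε
  have htr : ∀ l, r l = ∑ m, N (Sum.inl l) m * r2 m := fun l => ht (Sum.inl l)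
  have hts : ∀ l, s l = ∑ m, N (Sum.inr l) m * r2 m := fun l => ht (Sum.inr l)
  have swap1 : ∀ y : MA c, ctr (fun l => (r l : ℂ)) y =
      ∑ m, (r2 m : ℂ) * ∑ l, (N (Sum.inl l) m : ℂ) * (y l).trace := by
    intro y
    simp only [ctr_apply, Finset.mul_sum]
    rw [Finset.sum_comm]
    refine Finset.sum_congr rfl fun l _ => ?_
    rw [htr l]; push_cast; rw [Finset.sum_mul]
    exact Finset.sum_congr rfl fun m _ => by ring
  have swap2 : ∀ y : MA κ', ctr (fun l => (s l : ℂ)) y =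
      ∑ m, (r2 m : ℂ) * ∑ l, (N (Sum.inr l) m : ℂ) * (y l).trace := by
    intro y
    simp only [ctr_apply, Finset.mul_sum]
    rw [Finset.sum_comm]
    refine Finset.sum_congr rfl fun l _ => ?_
    rw [hts l]; push_cast; rw [Finset.sum_mul]
    exact Finset.sum_congr rfl fun m _ => by ring
  have nat1 : ∀ {k : ℕ} {κ : Fin k → ℕ} (p : MA κ), star p = p → p * p = p →
      ∃ n : Fin k → ℕ, ∀ l, (p l).trace = n l := by
    intro k κ p h1 h2
    have : ∀ l, ∃ n : ℕ, (p l).trace = n := fun l => by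
      obtain ⟨U, S, -, -, -, h⟩ := proj_diag (p l) (congrFun h1 l) (congrFun h2 l)
      exact ⟨_, h⟩
    choose n hn using this
    exact ⟨n, hn⟩
  have hχp : ∀ p : MA κ, star p = p → p * p = p → ∀ m,
      ∑ l, (N (Sum.inl l) m : ℂ) * (φ p l).trace = ∑ l, (N (Sum.inr l) m : ℂ) * (i p l).trace := by
    intro p h1 h2 m
    obtain ⟨n1, hn1⟩ := nat1 (φ p) (by rw [← map_star, h1]) (by rw [← map_mul, h2])
    obtain ⟨n2, hn2⟩ := nat1 (i p) (by rw [← map_star, h1]) (by rw [← map_mul, h2])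
    have e := hcomp p
    rw [swap1, swap2] at e
    simp only [hn1, hn2] at e ⊢
    have e' : ∑ m, (r2 m) * ∑ l, (N (Sum.inl l) m : ℝ) * (n1 l) =
      ∑ m, (r2 m) * ∑ l, (N (Sum.inr l) m : ℝ) * (n2 l) := by exact_mod_cast e
    have e2 : ∑ m, (∑ l, (N (Sum.inl l) m : ℚ) * (n1 l) - ∑ l, (N (Sum.inr l) m : ℚ) * (n2 l)) • r2 m = 0 := by
      rw [← sub_eq_zero, ← Finset.sum_sub_distrib] at e'
      rw [← e']
      refine Finset.sum_congr rfl fun m _ => ?_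
      rw [Rat.smul_def]; push_cast; ring
    have e3 := Fintype.linearIndependent_iff.1 hli _ e2 m
    rw [sub_eq_zero] at e3
    exact_mod_cast e3
  have hχ : ∀ x : MA κ, ∀ m,
      ∑ l, (N (Sum.inl l) m : ℂ) * (φ x l).trace = ∑ l, (N (Sum.inr l) m : ℂ) * (i x l).trace := by
    intro x m
    have t1 := tracial_form h0 ((ctr fun l => (N (Sum.inl l) m : ℂ)) ∘ₗ φ.toLinearMap)
      (fun x y => by simp [map_mul, ctr_comm _ (φ x)])
    have t2 := tracial_form h0 ((ctr fun l => (N (Sum.inr l) m : ℂ)) ∘ₗ i.toLinearMap)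
      (fun x y => by simp [map_mul, ctr_comm _ (i x)])
    have : (ctr fun l => (N (Sum.inl l) m : ℂ)) ∘ₗ φ.toLinearMap =
       (ctr fun l => (N (Sum.inr l) m : ℂ)) ∘ₗ i.toLinearMap := by
      rw [t1, t2]
      congr 1; ext l
      exact hχp _ (EE_proj l _).1 (EE_proj l _).2 m
    exact LinearMap.congr_fun this x
  let c2 : Fin d → ℕ := fun m => ∑ l, N (Sum.inl l) m * c l
  have hdim : ∀ m, c2 m = ∑ l, N (Sum.inr l) m * κ' l := by
    intro m
    have := hχ 1 m
    simp only [map_one, Pi.one_apply, Matrix.trace_one, Fintype.card_fin] at this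
    simp only [c2]
    exact_mod_cast this
  choose μ hμ using fun m => mult_rep c (fun l => N (Sum.inl l) m) (c2 m) rfl
  choose ν hν using fun m => mult_rep κ' (fun l => N (Sum.inr l) m) (c2 m) (hdim m)
  choose U hU1 hU2 hU using fun m => rep_equiv h0 ((ν m).comp i) ((μ m).comp φ)
    (fun x => by simp only [StarAlgHom.comp_apply]; rw [hν, hμ]; exact (hχ x m).symm)
  let ψ : MA c →⋆ₐ[ℂ] MA c2 :=
    { toFun := fun x m => μ m x
      map_one' := by ext1 m; exact map_one (μ m)
      map_mul' := fun x y => by ext1 m; exact map_mul (μ m) x y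
      map_zero' := by ext1 m; exact map_zero (μ m)
      map_add' := fun x y => by ext1 m; exact map_add (μ m) x y
      commutes' := fun x => by ext1 m; exact AlgHomClass.commutes (μ m) x
      map_star' := fun x => by ext1 m; exact map_star (μ m) x }
  have hcj : ∀ m (x y : Matrix (Fin (c2 m)) (Fin (c2 m)) ℂ), U m * (x * y) * star (U m) =
      (U m * x * star (U m)) * (U m * y * star (U m)) := by
    intro m x y
    have : (U m * x * star (U m)) * (U m * y * star (U m)) = U m * x * (star (U m) * U m) * y * star (U m) := by
      simp only [mul_assoc]
    rw [this, hU1]; simp only [mul_assoc, mul_one, one_mul]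
  let φ' : MA κ' →⋆ₐ[ℂ] MA c2 :=
    { toFun := fun x m => U m * ν m x * star (U m)
      map_one' := by ext1 m; simp [hU2]
      map_mul' := fun x y => by ext1 m; simp only [map_mul, Pi.mul_apply]; exact hcj m _ _
      map_zero' := by ext1 m; simp
      map_add' := fun x y => by ext1 m; simp [mul_add, add_mul]
      commutes' := fun x => by
        ext1 m; simp [AlgHomClass.commutes, Algebra.algebraMap_eq_smul_one, hU2]
      map_star' := fun x => by ext1 m; simp [map_star, mul_assoc] }
  have hψt : ∀ x m, (ψ x m).trace = ∑ l, (N (Sum.inl l) m : ℂ) * (x l).trace := fun x m => hμ m x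
  have hφt : ∀ x m, (φ' x m).trace = ∑ l, (N (Sum.inr l) m : ℂ) * (x l).trace := by
    intro x m
    change (U m * ν m x * star (U m)).trace = _
    rw [Matrix.trace_mul_comm, ← mul_assoc, hU1, one_mul, hν]
  refine ⟨d, c2, r2, φ', ψ, fun l m => N (Sum.inl l) m, D, fun m => ?_, hr2, fun x => ?_, ?_, ?_, hψt,
    fun l m => hN _ _, hD, fun l m => hND (Sum.inl l) m⟩
  · exact Finset.sum_pos (fun l _ => Nat.mul_pos (hN _ _) (hc l)) ⟨⟨0, hkc⟩, Finset.mem_univ _⟩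
  · ext1 m; exact hU m x
  · intro x; rw [swap2, ctr_apply]; simp only [hφt]
  · intro x; rw [swap1, ctr_apply]; simp only [hψt]

end Part5

section Part6

section IndLim
variable {C : ℕ → Type} [∀ n, CStarAlgebra (C n)] (ψ : ∀ n, C n →⋆ₐ[ℂ] C (n+1))

/-- eventually compatible sequences -/
def indSub : StarSubalgebra ℂ (∀ n, C n) where
  carrier := {x | ∀ᶠ n in Filter.atTop, x (n+1) = ψ n (x n)}
  mul_mem' := fun {a b} ha hb => by
    filter_upwards [ha, hb] with n h1 h2
    simp [h1, h2]
  add_mem' := fun {a b} ha hb => by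
    filter_upwards [ha, hb] with n h1 h2
    simp [h1, h2]
  algebraMap_mem' := fun r => by
    refine Filter.Eventually.of_forall fun n => ?_
    simp only [Pi.algebraMap_apply, AlgHomClass.commutes]
  star_mem' := fun {a} ha => by
    filter_upwards [ha] with n h1
    simp [h1, map_star]

/-- type of eventually compatible sequences -/
def IndP : Type := indSub ψ

noncomputable instance : Ring (IndP ψ) := inferInstanceAs (Ring (indSub ψ))
noncomputable instance : Algebra ℂ (IndP ψ) := inferInstanceAs (Algebra ℂ (indSub ψ))
noncomputable instance : StarRing (IndP ψ) := inferInstanceAs (StarRing (indSub ψ))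
noncomputable instance : StarModule ℂ (IndP ψ) := inferInstanceAs (StarModule ℂ (indSub ψ))

/-- coordinate -/
def IndP.co {ψ : ∀ n, C n →⋆ₐ[ℂ] C (n+1)} (x : IndP ψ) (n : ℕ) : C n := x.1 n

/-- limit norm -/
noncomputable def IndP.nrm {ψ : ∀ n, C n →⋆ₐ[ℂ] C (n+1)} (x : IndP ψ) : ℝ :=
  Filter.atTop.limUnder (fun n => ‖x.co n‖)

variable {ψ} (hψ : ∀ n x, ‖ψ n x‖ = ‖x‖)
include hψ

theorem IndP.nrm_spec (x : IndP ψ) : ∀ᶠ n in Filter.atTop, ‖x.co n‖ = x.nrm := by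
  obtain ⟨N, hN⟩ := Filter.eventually_atTop.1 x.2
  have h1 : ∀ n ≥ N, ‖x.co n‖ = ‖x.co N‖ := by
    intro n hn
    induction n, hn using Nat.le_induction with
    | base => rfl
    | succ n hn ih => rw [← ih, ← hψ n]; exact congrArg _ (hN n hn)
  have h2 : Filter.Tendsto (fun n => ‖x.co n‖) Filter.atTop (nhds ‖x.co N‖) :=
    tendsto_const_nhds.congr' (Filter.eventually_atTop.2 ⟨N, fun n hn => (h1 n hn).symm⟩)
  have h3 : x.nrm = ‖x.co N‖ := h2.limUnder_eq
  exact Filter.eventually_atTop.2 ⟨N, fun n hn => by rw [h3, h1 n hn]⟩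

/-- seminorm -/
noncomputable def indSemi : RingSeminorm (IndP ψ) where
  toFun := IndP.nrm
  map_zero' := by
    obtain ⟨n, hn⟩ := (IndP.nrm_spec hψ (0 : IndP ψ)).exists
    rw [← hn]; exact norm_zero
  add_le' x y := by
    obtain ⟨n, h1, h2, h3⟩ := ((IndP.nrm_spec hψ (x+y)).and ((IndP.nrm_spec hψ x).and (IndP.nrm_spec hψ y))).exists
    rw [← h1, ← h2, ← h3]; exact norm_add_le _ _
  neg' x := by
    obtain ⟨n, h1, h2⟩ := ((IndP.nrm_spec hψ (-x)).and (IndP.nrm_spec hψ x)).exists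
    rw [← h1, ← h2]; exact norm_neg _
  mul_le' x y := by
    obtain ⟨n, h1, h2, h3⟩ := ((IndP.nrm_spec hψ (x*y)).and ((IndP.nrm_spec hψ x).and (IndP.nrm_spec hψ y))).exists
    rw [← h1, ← h2, ← h3]; exact norm_mul_le _ _

theorem indlim_aux : ∃ (P : Type) (_ : SeminormedRing P) (_ : NormedAlgebra ℂ P) (_ : StarRing P)
    (_ : StarModule ℂ P) (co : P → ∀ n, C n),
    (∀ x : P, ‖star x * x‖ = ‖x‖ * ‖x‖) ∧ (∀ x : P, ‖star x‖ = ‖x‖) ∧ 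
    (∀ x : P, ∀ᶠ n in Filter.atTop, ‖co x n‖ = ‖x‖) ∧
    (∀ x y : P, ∀ n, co (x * y) n = co x n * co y n) ∧
    (∀ x y : P, ∀ n, co (x + y) n = co x n + co y n) ∧
    (∀ x y : P, ∀ n, co (x - y) n = co x n - co y n) ∧
    (∀ x : P, ∀ n, co (star x) n = star (co x n)) ∧
    (∀ (r : ℂ) (n), co (algebraMap ℂ P r) n = algebraMap ℂ (C n) r) ∧
    (∀ n, co 1 n = 1) ∧ (∀ n, co 0 n = 0) ∧
    (∀ x : P, ∀ᶠ n in Filter.atTop, co x (n+1) = ψ n (co x n)) ∧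
    (∀ s : ∀ n, C n, (∀ᶠ n in Filter.atTop, s (n+1) = ψ n (s n)) → ∃ x, co x = s) := by
  let i1 : SeminormedRing (IndP ψ) :=
    { (inferInstance : Ring (IndP ψ)), (indSemi hψ).toAddGroupSeminorm.toSeminormedAddCommGroup with
      norm_mul_le := (indSemi hψ).mul_le' }
  have hn : ∀ x : IndP ψ, ‖x‖ = x.nrm := fun _ => rfl
  let i2 : NormedAlgebra ℂ (IndP ψ) :=
    { (inferInstance : Algebra ℂ (IndP ψ)) with
      norm_smul_le := fun r x => by
        rw [hn, hn]
        obtain ⟨n, h1, h2⟩ := ((IndP.nrm_spec hψ (r • x)).and (IndP.nrm_spec hψ x)).exists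
        rw [← h1, ← h2]; exact norm_smul_le r (x.co n) }
  refine ⟨IndP ψ, i1, i2, (inferInstance : StarRing (IndP ψ)), (inferInstance : StarModule ℂ (IndP ψ)), IndP.co, ?_, ?_,
    IndP.nrm_spec hψ, fun _ _ _ => rfl, fun _ _ _ => rfl, fun _ _ _ => rfl, fun _ _ => rfl,
    fun _ _ => rfl, fun _ => rfl, fun _ => rfl, fun x => x.2, fun s hs => ⟨⟨s, hs⟩, rfl⟩⟩
  · intro x
    rw [hn, hn]
    obtain ⟨n, h1, h2⟩ := ((IndP.nrm_spec hψ (star x * x)).and (IndP.nrm_spec hψ x)).exists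
    rw [← h1, ← h2]; exact CStarRing.norm_star_mul_self (x := x.co n)
  · intro x
    rw [hn, hn]
    obtain ⟨n, h1, h2⟩ := ((IndP.nrm_spec hψ (star x)).and (IndP.nrm_spec hψ x)).exists
    rw [← h1, ← h2]; exact norm_star (x.co n)

omit hψ in
theorem compl_cstar (P : Type) [SeminormedRing P] [NormedAlgebra ℂ P] [StarRing P] [StarModule ℂ P]
    (h1 : ∀ x : P, ‖star x * x‖ = ‖x‖ * ‖x‖) (h2 : ∀ x : P, ‖star x‖ = ‖x‖) :
    ∃ (L : Type) (_ : CStarAlgebra L) (j : P →⋆ₐ[ℂ] L), (∀ x, ‖j x‖ = ‖x‖) ∧ DenseRange j := by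
  have hsu : UniformContinuous (star : P → P) := by
    have : Isometry (star : P → P) := AddMonoidHomClass.isometry_of_norm (starAddEquiv : P ≃+ P) h2
    exact this.uniformContinuous
  let L := UniformSpace.Completion P
  let sL : Star L := ⟨UniformSpace.Completion.map star⟩
  have hsc : Continuous (star : L → L) := UniformSpace.Completion.continuous_map
  have hcoe : ∀ x : P, star (x : L) = ((star x : P) : L) := fun x => UniformSpace.Completion.map_coe hsu x
  let sr : StarRing L :=
    { star_involutive := fun x => by
        induction x using UniformSpace.Completion.induction_on with
        | hp => exact isClosed_eq (hsc.comp hsc) continuous_id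
        | ih x => rw [hcoe, hcoe, star_star]
      star_mul := fun x y => by
        induction x, y using UniformSpace.Completion.induction_on₂ with
        | hp => exact isClosed_eq (hsc.comp (continuous_fst.mul continuous_snd)) ((hsc.comp continuous_snd).mul (hsc.comp continuous_fst))
        | ih x y => rw [← UniformSpace.Completion.coe_mul, hcoe, hcoe, hcoe, star_mul, UniformSpace.Completion.coe_mul]
      star_add := fun x y => by
        induction x, y using UniformSpace.Completion.induction_on₂ with
        | hp => exact isClosed_eq (hsc.comp (continuous_fst.add continuous_snd)) ((hsc.comp continuous_fst).add (hsc.comp continuous_snd))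
        | ih x y => rw [← UniformSpace.Completion.coe_add, hcoe, hcoe, hcoe, star_add, UniformSpace.Completion.coe_add] }
  let na : NormedAlgebra ℂ L := 
    { (inferInstance : Algebra ℂ L) with norm_smul_le := norm_smul_le }
  have sm : StarModule ℂ L := ⟨fun r x => by
        induction x using UniformSpace.Completion.induction_on with
        | hp => exact isClosed_eq (hsc.comp (continuous_const_smul _)) ((continuous_const_smul _).comp hsc)
        | ih x => rw [← UniformSpace.Completion.coe_smul, hcoe, hcoe, star_smul, UniformSpace.Completion.coe_smul]⟩
  have cr : CStarRing L := ⟨fun x => by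
        induction x using UniformSpace.Completion.induction_on with
        | hp => exact isClosed_le (continuous_norm.mul continuous_norm) (continuous_norm.comp (hsc.mul continuous_id))
        | ih x => 
          rw [hcoe, ← UniformSpace.Completion.coe_mul, UniformSpace.Completion.norm_coe, UniformSpace.Completion.norm_coe, h1]⟩
  refine ⟨L, { na, sr, sm, cr with }, 
    { toFun := fun x => (x : L)
      map_one' := UniformSpace.Completion.coe_one _
      map_mul' := fun x y => UniformSpace.Completion.coe_mul x y
      map_zero' := UniformSpace.Completion.coe_zero
      map_add' := fun x y => UniformSpace.Completion.coe_add x y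
      commutes' := fun r => rfl
      map_star' := fun x => (hcoe x).symm }, fun x => UniformSpace.Completion.norm_coe x, UniformSpace.Completion.denseRange_coe⟩

theorem indlim : ∃ (L : Type) (_ : CStarAlgebra L) (ι : ∀ n, C n →⋆ₐ[ℂ] L),
    (∀ n x, ‖ι n x‖ = ‖x‖) ∧ (∀ n x, ι (n+1) (ψ n x) = ι n x) ∧ Dense (⋃ n, Set.range (ι n)) := by
  classical
  obtain ⟨P, i1, i2, i3, i4, co, h1, h2, hn, hmul, hadd, hsub, hstar, halg, hone, hzero, hco, hex⟩ := indlim_aux hψ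
  obtain ⟨L, iL, j, hj, hd⟩ := compl_cstar (P) h1 h2
  have hje : ∀ x y : P, (∀ᶠ n in Filter.atTop, co x n = co y n) → j x = j y := by
    intro x y h
    rw [← sub_eq_zero, ← map_sub, ← norm_eq_zero, hj]
    obtain ⟨n, a, b⟩ := (h.and (hn (x - y))).exists
    rw [← b, hsub, a, sub_self, norm_zero]
  let T : ∀ n m, n ≤ m → (C n →⋆ₐ[ℂ] C m) := fun n m h =>
    Nat.leRecOn (C := fun m => C n →⋆ₐ[ℂ] C m) h (fun {k} f => (ψ k).comp f) (StarAlgHom.id ℂ (C n))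
  have Tself : ∀ n x, T n n le_rfl x = x := fun n x => by simp only [T]; rw [Nat.leRecOn_self]; rfl
  have Tsucc : ∀ n m (h : n ≤ m) (h' : n ≤ m+1) x, T n (m+1) h' x = ψ m (T n m h x) := fun n m h h' x => by
    simp only [T]; rw [Nat.leRecOn_succ h]; rfl
  have Tn : ∀ n m (h : n ≤ m) x, ‖T n m h x‖ = ‖x‖ := by
    intro n m h x
    induction m, h using Nat.le_induction with
    | base => rw [Tself]
    | succ m hm ih => rw [Tsucc n m hm, hψ, ih]
  have T1 : ∀ n m (h : n + 1 ≤ m) (h' : n ≤ m) x, T (n+1) m h (ψ n x) = T n m h' x := by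
    intro n m h
    induction m, h using Nat.le_induction with
    | base => intro h' x; rw [Tself, Tsucc n n le_rfl, Tself]
    | succ m hm ih => intro h' x; rw [Tsucc _ _ hm, Tsucc _ _ (by omega), ih]
  have hs0 : ∀ n (x : C n), ∃ p : P, ∀ m (h : n ≤ m), co p m = T n m h x := by
    intro n x
    obtain ⟨p, hp⟩ := hex (fun m => if h : n ≤ m then T n m h x else 0) (by
      refine Filter.eventually_atTop.2 ⟨n, fun m hm => ?_⟩
      rw [dif_pos (show n ≤ m from hm), dif_pos (show n ≤ m + 1 by omega), Tsucc _ _ hm])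
    exact ⟨p, fun m h => by rw [hp]; exact dif_pos h⟩
  choose s hs using hs0
  let ι : ∀ n, C n →⋆ₐ[ℂ] L := fun n =>
    { toFun := fun x => j (s n x)
      map_one' := by
        rw [← map_one j]
        refine hje _ _ (Filter.eventually_atTop.2 ⟨n, fun m hm => ?_⟩)
        rw [hs _ _ _ hm, hone, map_one]
      map_mul' := fun x y => by
        rw [← map_mul j]
        refine hje _ _ (Filter.eventually_atTop.2 ⟨n, fun m hm => ?_⟩)
        rw [hmul, hs _ _ _ hm, hs _ _ _ hm, hs _ _ _ hm, map_mul]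
      map_zero' := by
        rw [← map_zero j]
        refine hje _ _ (Filter.eventually_atTop.2 ⟨n, fun m hm => ?_⟩)
        rw [hs _ _ _ hm, hzero, map_zero]
      map_add' := fun x y => by
        rw [← map_add j]
        refine hje _ _ (Filter.eventually_atTop.2 ⟨n, fun m hm => ?_⟩)
        rw [hadd, hs _ _ _ hm, hs _ _ _ hm, hs _ _ _ hm, map_add]
      commutes' := fun r => by
        rw [← AlgHomClass.commutes j]
        refine hje _ _ (Filter.eventually_atTop.2 ⟨n, fun m hm => ?_⟩)
        rw [halg, hs _ _ _ hm, AlgHomClass.commutes]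
      map_star' := fun x => by
        rw [← map_star j]
        refine hje _ _ (Filter.eventually_atTop.2 ⟨n, fun m hm => ?_⟩)
        rw [hstar, hs _ _ _ hm, hs _ _ _ hm, map_star] }
  have hι : ∀ n x, ι n x = j (s n x) := fun _ _ => rfl
  refine ⟨L, iL, ι, ?_, ?_, ?_⟩
  · intro n x
    rw [hι, hj]
    obtain ⟨m, a, b⟩ := ((hn (s n x)).and (Filter.eventually_ge_atTop n)).exists
    rw [← a, hs _ _ _ b, Tn]
  · intro n x
    rw [hι, hι]
    refine hje _ _ (Filter.eventually_atTop.2 ⟨n+1, fun m hm => ?_⟩)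
    rw [hs _ _ _ hm, hs _ _ _ (by omega), T1]
  · refine hd.mono ?_
    rintro _ ⟨x, rfl⟩
    obtain ⟨N, hN⟩ := Filter.eventually_atTop.1 (hco x)
    refine Set.mem_iUnion.2 ⟨N, co x N, ?_⟩
    rw [hι]
    refine hje _ _ (Filter.eventually_atTop.2 ⟨N, fun m hm => ?_⟩)
    rw [hs _ _ _ hm]
    induction m, hm using Nat.le_induction with
    | base => rw [Tself]
    | succ m hm ih => rw [Tsucc _ _ hm, ih]; exact (hN m hm).symm

end IndLim

end Part6

section Part7
open scoped ComplexOrder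
open scoped Matrix.Norms.L2Operator

theorem entry_le {N : ℕ} (x : Matrix (Fin N) (Fin N) ℂ) (a b : Fin N) : ‖x a b‖ ≤ ‖x‖ := by
  have h := Matrix.l2_opNorm_mulVec x (EuclideanSpace.single b (1:ℂ))
  rw [EuclideanSpace.norm_single, norm_one, mul_one] at h
  refine le_trans (le_of_eq ?_) (le_trans (PiLp.norm_apply_le _ a) h)
  simp

theorem tr_le {N : ℕ} (x : Matrix (Fin N) (Fin N) ℂ) : ‖x.trace‖ ≤ N * ‖x‖ := by
  refine (norm_sum_le _ _).trans ?_
  refine (Finset.sum_le_sum fun a _ => entry_le x a a).trans ?_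
  simp

/-- tracial state -/
def TrS (B : Type) [CStarAlgebra B] (τ : B →ₗ[ℂ] ℂ) : Prop :=
  τ 1 = 1 ∧ (∀ a : B, 0 ≤ τ (star a * a)) ∧ ∀ a b : B, τ (a * b) = τ (b * a)

theorem tr_pos {N : ℕ} (x : Matrix (Fin N) (Fin N) ℂ) : 0 ≤ (star x * x).trace := by
  have := Matrix.PosSemidef.trace_nonneg (Matrix.posSemidef_conjTranspose_mul_self x)
  exact this

theorem trs_cont {B : Type} [CStarAlgebra B] {τ : B →ₗ[ℂ] ℂ} (h : ∀ a : B, 0 ≤ τ (star a * a)) : Continuous τ := by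
  letI := CStarAlgebra.spectralOrder B
  haveI := CStarAlgebra.spectralOrderedRing B
  let f : B →ₚ[ℂ] ℂ := PositiveLinearMap.mk₀ τ (fun x hx => by
    obtain ⟨y, rfl⟩ := CStarAlgebra.nonneg_iff_eq_star_mul_self.1 hx
    exact h y)
  obtain ⟨C, hC⟩ := PositiveLinearMap.exists_norm_apply_le f
  exact (LinearMap.mkContinuous τ C hC).continuous

theorem trs_faith {B : Type} [CStarAlgebra B] [Nontrivial B] 
    (hs : ∀ I : TwoSidedIdeal B, IsClosed (I : Set B) → I = ⊥ ∨ I = ⊤) 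
    {τ : B →ₗ[ℂ] ℂ} (h : TrS B τ) (a : B) (ha : τ (star a * a) = 0) : a = 0 := by
  have hc := trs_cont h.2.1
  obtain ⟨h1, h2, h3⟩ := h
  have cs : ∀ b, τ (b * a) = 0 := by
    intro b
    letI := CStarAlgebra.spectralOrder B
    haveI := CStarAlgebra.spectralOrderedRing B
    let f : B →ₚ[ℂ] ℂ := PositiveLinearMap.mk₀ τ (fun x hx => by
      obtain ⟨y, rfl⟩ := CStarAlgebra.nonneg_iff_eq_star_mul_self.1 hx
      exact h2 y)
    have e1 := norm_inner_le_norm (𝕜 := ℂ) (f.toPreGNS (star b)) (f.toPreGNS a)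
    have e2 : ‖f.toPreGNS a‖ = 0 := by
      rw [PositiveLinearMap.preGNS_norm_def]
      have : f (star a * a) = 0 := ha
      simp [this]
    rw [e2, mul_zero, PositiveLinearMap.preGNS_inner_def] at e1
    have e3 : f (b * a) = 0 := by simpa using e1
    exact e3
  let I : TwoSidedIdeal B := TwoSidedIdeal.mk' {a | ∀ b, τ (b * a) = 0} (by simp)
    (fun {x y} hx hy b => by rw [mul_add, map_add, hx, hy, add_zero])
    (fun {x} hx b => by rw [mul_neg, map_neg, hx, neg_zero])
    (fun {x y} hy b => by rw [← mul_assoc]; exact hy _)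
    (fun {x y} hx b => by rw [← mul_assoc, h3, ← mul_assoc]; exact hx _)
  have hI : ∀ x, x ∈ I ↔ ∀ b, τ (b * x) = 0 := fun x => TwoSidedIdeal.mem_mk' _ _ _ _ _ _ _
  have hcl : IsClosed (I : Set B) := by
    have : (I : Set B) = ⋂ b, {x | τ (b * x) = 0} := by
      ext x; simp only [SetLike.mem_coe, hI, Set.mem_iInter, Set.mem_setOf_eq]
    rw [this]
    exact isClosed_iInter fun b => isClosed_eq (hc.comp (continuous_const.mul continuous_id)) continuous_const
  rcases hs I hcl with h | h
  · have : a ∈ I := (hI a).2 cs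
    rw [h] at this
    exact (TwoSidedIdeal.mem_bot B).1 this
  · have : (1:B) ∈ I := by rw [h]; trivial
    have := (hI 1).1 this 1
    rw [mul_one, h1] at this
    exact absurd this one_ne_zero

theorem af_pres {B : Type} [CStarAlgebra B] (S : ℕ → StarSubalgebra ℂ B) (hm : Monotone S)
    (hf : ∀ n, FiniteDimensional ℂ (S n)) (hd : Dense (⋃ n, (S n : Set B))) :
    ∃ (k : ℕ → ℕ) (κ : ∀ n, Fin (k n) → ℕ) (j : ∀ n, MA (κ n) →⋆ₐ[ℂ] B)
      (i : ∀ n, MA (κ n) →⋆ₐ[ℂ] MA (κ (n+1))), (∀ n l, 0 < κ n l) ∧ (∀ n, Function.Injective (j n)) ∧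
      (∀ n x, j (n+1) (i n x) = j n x) ∧ Dense (⋃ n, Set.range (j n)) := by
  have h1 : ∀ n, ∃ (k : ℕ) (κ : Fin k → ℕ), (∀ l, 0 < κ l) ∧ Nonempty (S n ≃⋆ₐ[ℂ] MA κ) := by
    intro n
    haveI : IsClosed (S n : Set B) := by
      have := hf n
      exact Submodule.closed_of_finiteDimensional (S n).toSubalgebra.toSubmodule
    have := hf n
    exact wedder (S n)
  choose k κ hκ e using h1
  let e := fun n => (e n).some
  refine ⟨k, κ, fun n => (S n).subtype.comp ((e n).symm : MA (κ n) →⋆ₐ[ℂ] S n),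
    fun n => ((e (n+1) : S (n+1) →⋆ₐ[ℂ] MA (κ (n+1))).comp (StarSubalgebra.inclusion (hm n.le_succ))).comp ((e n).symm : MA (κ n) →⋆ₐ[ℂ] S n), hκ, ?_, ?_, ?_⟩
  · intro n x y h
    exact (e n).symm.injective (Subtype.ext h)
  · intro n x
    simp
  · convert hd using 3 with n
    ext x
    constructor
    · rintro ⟨y, rfl⟩
      exact ((e n).symm y).2
    · intro hx
      exact ⟨e n ⟨x, hx⟩, by simp⟩

theorem exists_trace {B : Type} [CStarAlgebra B] [Nontrivial B] (k : ℕ → ℕ) (κ : ∀ n, Fin (k n) → ℕ)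
    (j : ∀ n, MA (κ n) →⋆ₐ[ℂ] B) (hκ : ∀ n l, 0 < κ n l) (hj : ∀ n, Function.Injective (j n))
    (hm : ∀ n x, ∃ y, j (n+1) y = j n x) (hd : Dense (⋃ n, Set.range (j n))) :
    ∃ τ : B →ₗ[ℂ] ℂ, TrS B τ := by
  have hk : ∀ n, 0 < k n := by
    intro n
    rcases Nat.eq_zero_or_pos (k n) with h | h
    · exfalso
      have : IsEmpty (Fin (k n)) := by rw [h]; infer_instance
      have h2 : (1 : MA (κ n)) = 0 := Subsingleton.elim _ _
      have := congrArg (j n) h2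
      rw [map_one, map_zero] at this
      exact one_ne_zero this
    · exact h
  have hmm : ∀ n m, n ≤ m → ∀ x, ∃ y, j m y = j n x := by
    intro n m h x
    induction m, h using Nat.le_induction with
    | base => exact ⟨x, rfl⟩
    | succ m hm' ih =>
      obtain ⟨y, hy⟩ := ih
      obtain ⟨z, hz⟩ := hm m y
      exact ⟨z, hz.trans hy⟩
  have h1 : ∀ n, ∃ f : B →L[ℂ] ℂ, (∀ b, ‖f b‖ ≤ ‖b‖) ∧ f 1 = 1 ∧
      (∀ x, 0 ≤ f (star (j n x) * j n x)) ∧ (∀ x y, f (j n x * j n y) = f (j n y * j n x)) := by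
    intro n
    let l : Fin (k n) := ⟨0, hk n⟩
    let w : Fin (k n) → ℂ := Pi.single l ((κ n l : ℂ)⁻¹)
    have hc0 : (κ n l : ℂ) ≠ 0 := by exact_mod_cast (hκ n l).ne'
    have hr0 : (κ n l : ℝ) ≠ 0 := by exact_mod_cast (hκ n l).ne'
    have hw : ∀ x : MA (κ n), ctr w x = (κ n l : ℂ)⁻¹ * (x l).trace := by
      intro x
      rw [ctr_apply, Finset.sum_eq_single l]
      · simp [w]
      · intro b _ hb; simp [w, hb]
      · simp
    have hjn : ∀ x, ‖j n x‖ = ‖x‖ := NonUnitalStarAlgHom.norm_map (j n) (hj n)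
    let e := LinearEquiv.ofInjective (j n).toLinearMap (hj n)
    let g : LinearMap.range (j n).toLinearMap →L[ℂ] ℂ := LinearMap.mkContinuous
      ((ctr w) ∘ₗ e.symm.toLinearMap) 1 (by
        intro y
        obtain ⟨x, rfl⟩ := e.surjective y
        have : ‖e x‖ = ‖x‖ := hjn x
        rw [this]
        simp only [LinearMap.comp_apply, LinearEquiv.coe_coe, LinearEquiv.symm_apply_apply, hw, norm_mul, norm_inv, Complex.norm_natCast, one_mul]
        have := (tr_le (x l)).trans (mul_le_mul_of_nonneg_left (norm_le_pi_norm x l) (Nat.cast_nonneg _))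
        rw [inv_mul_le_iff₀ (by exact_mod_cast hκ n l)]
        exact this)
    obtain ⟨f, hf, hfn⟩ := exists_extension_norm_eq _ g
    have hfj : ∀ x, f (j n x) = (κ n l : ℂ)⁻¹ * (x l).trace := by
      intro x
      have := hf (e x)
      rw [← hw]
      refine this.trans ?_
      simp [g]
    refine ⟨f, fun b => ?_, ?_, ?_, ?_⟩
    · have : ‖f‖ ≤ 1 := by rw [hfn]; exact LinearMap.mkContinuous_norm_le _ zero_le_one _
      simpa using f.le_of_opNorm_le this b
    · rw [← map_one (j n), hfj]; simp [hc0]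
    · intro x
      rw [← map_star, ← map_mul, hfj]
      refine mul_nonneg ?_ (tr_pos (x l))
      rw [← Complex.ofReal_natCast, ← Complex.ofReal_inv]
      exact Complex.zero_le_real.2 (by positivity)
    · intro x y
      rw [← map_mul, ← map_mul, hfj, hfj, Pi.mul_apply, Pi.mul_apply, Matrix.trace_mul_comm]
  choose f hfb hf1 hfp hft using h1
  let U := Filter.hyperfilter ℕ
  have hU : (U : Filter ℕ) ≤ Filter.atTop := Nat.hyperfilter_le_atTop
  have h2 : ∀ b : B, ∃ z : ℂ, ‖z‖ ≤ ‖b‖ ∧ Filter.Tendsto (fun n => f n b) U (nhds z) := by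
    intro b
    obtain ⟨z, hz, hz'⟩ := (isCompact_closedBall (0:ℂ) ‖b‖).ultrafilter_le_nhds (U.map (fun n => f n b))
      (by
        rw [Filter.le_principal_iff]
        exact Filter.Eventually.of_forall (f := (U : Filter ℕ)) fun n => by simpa using hfb n b)
    exact ⟨z, by simpa using hz, hz'⟩
  choose t htb ht using h2
  let τ : B →ₗ[ℂ] ℂ :=
    { toFun := t
      map_add' := fun a b => tendsto_nhds_unique (ht (a+b)) (by simpa using (ht a).add (ht b))
      map_smul' := fun c b => tendsto_nhds_unique (ht (c • b)) (by simpa using (ht b).const_mul c) }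
  have hτc : Continuous τ := (LinearMap.mkContinuous τ 1 (fun b => by rw [one_mul]; exact htb b)).continuous
  refine ⟨τ, ?_, ?_, ?_⟩
  · exact tendsto_nhds_unique (ht 1) (by simp only [hf1]; exact tendsto_const_nhds)
  · have hcl : IsClosed {a : B | 0 ≤ τ (star a * a)} :=
      isClosed_le continuous_const (hτc.comp (continuous_star.mul continuous_id))
    have hsub : (⋃ n, Set.range (j n)) ⊆ {a : B | 0 ≤ τ (star a * a)} := by
      intro a ha
      obtain ⟨n, x, rfl⟩ := Set.mem_iUnion.1 ha
      refine ge_of_tendsto (ht _) (hU (Filter.eventually_atTop.2 ⟨n, fun m hm => ?_⟩))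
      obtain ⟨y, hy⟩ := hmm n m hm x
      simp only [← hy]; exact hfp m y
    intro a
    have := hcl.closure_subset_iff.2 hsub
    rw [hd.closure_eq] at this
    exact this (Set.mem_univ a)
  · have hcl : IsClosed {p : B × B | τ (p.1 * p.2) = τ (p.2 * p.1)} :=
      isClosed_eq (hτc.comp (continuous_fst.mul continuous_snd)) (hτc.comp (continuous_snd.mul continuous_fst))
    have hsub : (⋃ n, Set.range (j n)) ×ˢ (⋃ n, Set.range (j n)) ⊆ {p : B × B | τ (p.1 * p.2) = τ (p.2 * p.1)} := by
      rintro ⟨a, b⟩ ⟨ha, hb⟩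
      obtain ⟨n, x, rfl⟩ := Set.mem_iUnion.1 ha
      obtain ⟨n', x', rfl⟩ := Set.mem_iUnion.1 hb
      refine tendsto_nhds_unique (ht _) ((ht _).congr' (hU (Filter.eventually_atTop.2 ⟨max n n', fun m hm => ?_⟩)))
      obtain ⟨y, hy⟩ := hmm n m (le_of_max_le_left hm) x
      obtain ⟨y', hy'⟩ := hmm n' m (le_of_max_le_right hm) x'
      simp only [← hy, ← hy']; exact hft m _ _
    intro a b
    have := hcl.closure_subset_iff.2 hsub
    rw [(hd.prod hd).closure_eq] at this
    exact this (Set.mem_univ (a, b))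

end Part7

section Part8
open scoped ComplexOrder
open scoped Matrix.Norms.L2Operator

theorem pi_norm_att {k : ℕ} [Nonempty (Fin k)] {E : Fin k → Type} [∀ l, NormedAddCommGroup (E l)] (y : ∀ l, E l) :
    ∃ l, ‖y l‖ = ‖y‖ := by
  obtain ⟨l, hl⟩ := Finite.exists_max fun l => ‖y l‖
  exact ⟨l, le_antisymm (norm_le_pi_norm y l) ((pi_norm_le_iff_of_nonneg (norm_nonneg _)).2 hl)⟩

theorem mat_top {N : ℕ} (h0 : 0 < N) (M : Matrix (Fin N) (Fin N) ℂ) (hM : M ≠ 0) :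
    ∃ a b : Matrix (Fin N) (Fin N) ℂ, ‖a‖ ≤ 1 ∧ ‖b‖ ≤ 1 ∧
      a * M * b = (‖M‖ : ℂ) • Matrix.single ⟨0, h0⟩ ⟨0, h0⟩ 1 := by
  have hh : (star M * M).IsHermitian := Matrix.isHermitian_conjTranspose_mul_self M
  obtain ⟨U, hU⟩ : ∃ U : Matrix (Fin N) (Fin N) ℂ, U = hh.eigenvectorUnitary := ⟨_, rfl⟩
  have hU1 : star U * U = 1 := by rw [hU]; exact Unitary.coe_star_mul_self _
  have hU2 : U * star U = 1 := by rw [hU]; exact Unitary.coe_mul_star_self _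
  obtain ⟨lam, hlam⟩ : ∃ lam : Fin N → ℂ, lam = fun i => (hh.eigenvalues i : ℂ) := ⟨_, rfl⟩
  have hsp : star M * M = U * Matrix.diagonal lam * star U := by
    have := hh.spectral_theorem
    rw [this, hU, hlam]
    rfl
  have hlp : ∀ i, ‖lam i‖ = hh.eigenvalues i := by
    intro i
    rw [hlam]
    have : 0 ≤ hh.eigenvalues i := (Matrix.posSemidef_conjTranspose_mul_self M).eigenvalues_nonneg i
    simp [abs_of_nonneg this]
  have hdiag : star U * (star M * M) * U = Matrix.diagonal lam := by
    rw [hsp]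
    have : star U * (U * Matrix.diagonal lam * star U) * U = (star U * U) * Matrix.diagonal lam * (star U * U) := by
      simp only [mul_assoc]
    rw [this, hU1, one_mul, mul_one]
  have hUm : U ∈ unitary (Matrix (Fin N) (Fin N) ℂ) := Unitary.mem_iff.2 ⟨hU1, hU2⟩
  have hn : ‖lam‖ = ‖M‖ * ‖M‖ := by
    rw [← Matrix.l2_opNorm_diagonal, ← hdiag, CStarRing.norm_mul_mem_unitary _ hUm,
      CStarRing.norm_mem_unitary_mul _ (Unitary.star_mem hUm), CStarRing.norm_star_mul_self]
  have : Nonempty (Fin N) := ⟨⟨0, h0⟩⟩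
  obtain ⟨i, hi⟩ : ∃ i, lam i = ((‖M‖ * ‖M‖ : ℝ) : ℂ) := by
    obtain ⟨i, hi⟩ := pi_norm_att lam
    refine ⟨i, ?_⟩
    rw [← hn, ← hi, hlp, hlam]
  have hMn : (‖M‖ : ℂ) ≠ 0 := by simpa using hM
  let o : Fin N := ⟨0, h0⟩
  have hE : ‖(Matrix.single o o 1 : Matrix (Fin N) (Fin N) ℂ)‖ ≤ 1 := by
    rw [← Matrix.diagonal_single, Matrix.l2_opNorm_diagonal]
    rw [pi_norm_le_iff_of_nonneg zero_le_one]
    intro m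
    by_cases h : m = o
    · subst h; simp
    · simp [h]
  have hmid : (Matrix.single o i 1 : Matrix (Fin N) (Fin N) ℂ) * Matrix.diagonal lam * Matrix.single i o 1 
      = ((‖M‖ : ℂ) * ‖M‖) • Matrix.single o o 1 := by
    rw [Matrix.single_mul_mul_single]
    simp [hi, Matrix.smul_single]
  have hst : star (Matrix.single o i 1 : Matrix (Fin N) (Fin N) ℂ) = Matrix.single i o 1 := by
    rw [Matrix.star_eq_conjTranspose, Matrix.conjTranspose_single, star_one]
  have hst' : star (Matrix.single i o 1 : Matrix (Fin N) (Fin N) ℂ) = Matrix.single o i 1 := by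
    rw [Matrix.star_eq_conjTranspose, Matrix.conjTranspose_single, star_one]
  refine ⟨(‖M‖ : ℂ)⁻¹ • (Matrix.single o i 1 * star U * star M), U * Matrix.single i o 1, ?_, ?_, ?_⟩
  · refine abs_le_one_iff_mul_self_le_one.2 ?_ |> le_of_abs_le
    rw [← CStarRing.norm_self_mul_star]
    have : ((‖M‖ : ℂ)⁻¹ • (Matrix.single o i 1 * star U * star M)) * star ((‖M‖ : ℂ)⁻¹ • (Matrix.single o i 1 * star U * star M))
       = Matrix.single o o 1 := by
      rw [star_smul, smul_mul_smul_comm, star_mul, star_mul, star_star, star_star, hst]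
      have e : (Matrix.single o i 1 * star U * star M) * (M * (U * Matrix.single i o 1)) =
        (Matrix.single o i 1 : Matrix (Fin N) (Fin N) ℂ) * (star U * (star M * M) * U) * Matrix.single i o 1 := by
        simp only [mul_assoc]
      rw [e, hdiag, hmid, smul_smul]
      have : (‖M‖ : ℂ)⁻¹ * star (‖M‖ : ℂ)⁻¹ * (‖M‖ * ‖M‖) = 1 := by
        rw [star_inv₀]
        have : star (‖M‖ : ℂ) = ‖M‖ := Complex.conj_ofReal _
        rw [this]; field_simp
      rw [this, one_smul]
    rw [this]; exact hE
  · refine abs_le_one_iff_mul_self_le_one.2 ?_ |> le_of_abs_le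
    rw [← CStarRing.norm_star_mul_self, star_mul, hst']
    have : (Matrix.single o i 1 : Matrix (Fin N) (Fin N) ℂ) * star U * (U * Matrix.single i o 1) = Matrix.single o o 1 := by
      have e : (Matrix.single o i 1 : Matrix (Fin N) (Fin N) ℂ) * star U * (U * Matrix.single i o 1) = 
        (Matrix.single o i 1 : Matrix (Fin N) (Fin N) ℂ) * (star U * U) * Matrix.single i o 1 := by simp only [mul_assoc]
      rw [e, hU1, mul_one]; simp
    rw [this]; exact hE
  · have e : ((‖M‖ : ℂ)⁻¹ • (Matrix.single o i 1 * star U * star M)) * M * (U * Matrix.single i o 1) =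
       (‖M‖ : ℂ)⁻¹ • ((Matrix.single o i 1 : Matrix (Fin N) (Fin N) ℂ) * (star U * (star M * M) * U) * Matrix.single i o 1) := by
      simp only [smul_mul_assoc, mul_assoc]
    rw [e, hdiag, hmid, smul_smul]
    congr 1; field_simp

theorem MA_top {k : ℕ} {κ : Fin k → ℕ} (h0 : ∀ l, 0 < κ l) (y : MA κ) (hy : y ≠ 0) :
    ∃ (l : Fin k) (a b : MA κ), ‖a‖ ≤ 1 ∧ ‖b‖ ≤ 1 ∧
      a * y * b = (‖y‖ : ℂ) • EE l ⟨0, h0 l⟩ ⟨0, h0 l⟩ := by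
  have : Nonempty (Fin k) := by
    by_contra h
    rw [not_nonempty_iff] at h
    exact hy (Subsingleton.elim _ _)
  obtain ⟨l, hl⟩ := pi_norm_att y
  have hyl : y l ≠ 0 := by
    intro h; rw [h, norm_zero] at hl; exact hy (norm_eq_zero.1 hl.symm)
  obtain ⟨a, b, ha, hb, hab⟩ := mat_top (h0 l) (y l) hyl
  have hs : ∀ x : Matrix (Fin (κ l)) (Fin (κ l)) ℂ, ‖x‖ ≤ 1 → ‖(Pi.single l x : MA κ)‖ ≤ 1 := by
    intro x hx
    rw [pi_norm_le_iff_of_nonneg zero_le_one]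
    intro m
    by_cases h : m = l
    · subst h; simpa using hx
    · rw [Pi.single_eq_of_ne h]; simp
  refine ⟨l, Pi.single l a, Pi.single l b, hs a ha, hs b hb, ?_⟩
  rw [← hl]
  ext1 m
  unfold EE
  by_cases h : m = l
  · subst h; simpa using hab
  · simp only [Pi.mul_apply, Pi.smul_apply, Pi.single_eq_of_ne h, mul_zero, smul_zero]

theorem EE_mid {k : ℕ} {κ : Fin k → ℕ} (w : MA κ) (m : Fin k) (c a b d : Fin (κ m)) :
    EE m c a * w * EE m b d = (w m a b) • (EE m c d : MA κ) := by
  unfold EE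
  ext1 l
  by_cases h : l = m
  · subst h
    simp [Matrix.single_mul_mul_single, Matrix.smul_single]
  · simp only [Pi.mul_apply, Pi.smul_apply, Pi.single_eq_of_ne h, mul_zero, smul_zero]

theorem lim_simple {L : Type} [CStarAlgebra L] {k : ℕ → ℕ} {c : ∀ n, Fin (k n) → ℕ} (hc : ∀ n l, 0 < c n l)
    (ψ : ∀ n, MA (c n) →⋆ₐ[ℂ] MA (c (n+1))) (N : ∀ n, Fin (k n) → Fin (k (n+1)) → ℕ)
    (hN : ∀ n l m, 0 < N n l m)
    (htr : ∀ n x m, (ψ n x m).trace = ∑ l, (N n l m : ℂ) * (x l).trace)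
    (ι : ∀ n, MA (c n) →⋆ₐ[ℂ] L) (hι : ∀ n x, ‖ι n x‖ = ‖x‖) (hc' : ∀ n x, ι (n+1) (ψ n x) = ι n x)
    (hd : Dense (⋃ n, Set.range (ι n))) (I : TwoSidedIdeal L) : I = ⊥ ∨ I = ⊤ := by
  by_cases hI : ∃ x ∈ I, x ≠ 0
  · right
    obtain ⟨x, hx, hx0⟩ := hI
    have hxn : 0 < ‖x‖ := norm_pos_iff.2 hx0
    obtain ⟨w, hw, hxw⟩ := Metric.dense_iff.1 hd x (‖x‖/2) (by positivity)
    obtain ⟨n, y, rfl⟩ := Set.mem_iUnion.1 hxw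
    rw [Metric.mem_ball, dist_eq_norm] at hw
    have hyn : ‖ι n y - x‖ < ‖y‖ := by
      have := norm_sub_norm_le x (x - ι n y)
      rw [sub_sub_cancel, hι, norm_sub_rev x] at this
      linarith
    have hy0 : 0 < ‖y‖ := lt_of_le_of_lt (norm_nonneg _) hyn
    obtain ⟨l, a, b, ha, hb, hab⟩ := MA_top (hc n) y (norm_pos_iff.1 hy0)
    set e : MA (c n) := EE l ⟨0, hc n l⟩ ⟨0, hc n l⟩ with he
    have hpp : ι n e * ι n e = ι n e := by rw [← map_mul, (EE_proj l _).2]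
    have hyC : (‖y‖ : ℂ) ≠ 0 := by exact_mod_cast hy0.ne'
    let z := (‖y‖ : ℂ)⁻¹ • (ι n a * x * ι n b)
    have hz : z ∈ I := by
      have : z = ((‖y‖ : ℂ)⁻¹ • ι n a) * x * ι n b := by simp only [z, smul_mul_assoc]
      rw [this]
      exact I.mul_mem_right _ _ (I.mul_mem_left _ _ hx)
    have hq : ‖ι n e - z‖ < 1 := by
      have e1 : ι n e - z = (‖y‖ : ℂ)⁻¹ • (ι n a * (ι n y - x) * ι n b) := by
        have : ι n a * ι n y * ι n b = (‖y‖ : ℂ) • ι n e := by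
          rw [← map_mul, ← map_mul, hab, map_smul]
        rw [mul_sub, sub_mul, smul_sub, this, smul_smul, inv_mul_cancel₀ hyC, one_smul]
      rw [e1, norm_smul, norm_inv, Complex.norm_real, norm_norm, inv_mul_lt_iff₀ hy0, mul_one]
      refine lt_of_le_of_lt ?_ hyn
      refine (norm_mul_le _ _).trans ?_
      refine (mul_le_of_le_one_right (norm_nonneg _) (by rw [hι]; exact hb)).trans ?_
      refine (norm_mul_le _ _).trans ?_
      exact mul_le_of_le_one_left (norm_nonneg _) (by rw [hι]; exact ha)
    have hp : ι n e ∈ I := by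
      let u := Units.oneSub (ι n e - z) hq
      have hu : (u : L) = 1 - (ι n e - z) := rfl
      have : ι n e = ι n e * z * (u⁻¹ : Lˣ) := by
        rw [Units.eq_mul_inv_iff_mul_eq, hu, mul_sub, mul_sub, mul_one, hpp]
        abel
      rw [this]
      exact I.mul_mem_right _ _ (I.mul_mem_left _ _ hz)
    rw [← hc'] at hp
    have hEE : ∀ m (d : Fin (c (n+1) m)), ι (n+1) (EE m d d) ∈ I := by
      intro m d
      have hne : ψ n e m ≠ 0 := by
        intro h
        have := htr n e m
        rw [h, Matrix.trace_zero] at this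
        simp only [he, EE_trace, mul_ite, mul_one, mul_zero, Finset.sum_ite_eq, Finset.mem_univ, if_true] at this
        exact (hN n l m).ne' (by exact_mod_cast this.symm)
      obtain ⟨a', b', hab'⟩ : ∃ a' b', ψ n e m a' b' ≠ 0 := by
        by_contra! h
        exact hne (by ext i j; exact h i j)
      have e1 := EE_mid (ψ n e) m d a' b' d
      have e2 : ι (n+1) (EE m d d) = ((ψ n e m a' b')⁻¹ • ι (n+1) (EE m d a')) * ι (n+1) (ψ n e) * ι (n+1) (EE m b' d) := by
        rw [smul_mul_assoc, smul_mul_assoc, ← map_mul, ← map_mul, e1, map_smul, smul_smul, inv_mul_cancel₀ hab', one_smul]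
      rw [e2]
      exact I.mul_mem_right _ _ (I.mul_mem_left _ _ hp)
    have h1 : (1 : L) ∈ I := by
      rw [← map_one (ι (n+1)), ← EE_one, map_sum]
      refine sum_mem fun m _ => ?_
      rw [map_sum]
      exact sum_mem fun d _ => hEE m d
    refine eq_top_iff.2 fun x _ => ?_
    have := I.mul_mem_left x 1 h1
    rwa [mul_one] at this
  · left
    push Not at hI
    refine eq_bot_iff.2 fun x hx => ?_
    exact (TwoSidedIdeal.mem_bot L).2 (hI x hx)

end Part8

section Part9
open scoped ComplexOrder
open scoped Matrix.Norms.L2Operator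

/-- stage of the construction -/
structure Stg {k : ℕ} (κ : Fin k → ℕ) (s : Fin k → ℝ) where
  kc : ℕ
  c : Fin kc → ℕ
  r : Fin kc → ℝ
  φ : MA κ →⋆ₐ[ℂ] MA c
  hc : ∀ l, 0 < c l
  hr : ∀ l, 0 < r l
  hφ : ∀ x, ctr (fun l => (r l : ℂ)) (φ x) = ctr (fun l => (s l : ℂ)) x

theorem tower {k : ℕ → ℕ} {κ : ∀ n, Fin (k n) → ℕ} (hκ : ∀ n l, 0 < κ n l)
    (i : ∀ n, MA (κ n) →⋆ₐ[ℂ] MA (κ (n+1))) (s : ∀ n, Fin (k n) → ℝ) (hs : ∀ n l, 0 < s n l)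
    (hcs : ∀ n x, ctr (fun l => (s (n+1) l : ℂ)) (i n x) = ctr (fun l => (s n l : ℂ)) x)
    (h1 : ∀ n, ctr (fun l => (s n l : ℂ)) (1 : MA (κ n)) = 1) :
    ∃ (kc : ℕ → ℕ) (c : ∀ n, Fin (kc n) → ℕ) (r : ∀ n, Fin (kc n) → ℝ)
      (φ : ∀ n, MA (κ n) →⋆ₐ[ℂ] MA (c n)) (ψ : ∀ n, MA (c n) →⋆ₐ[ℂ] MA (c (n+1)))
      (N : ∀ n, Fin (kc n) → Fin (kc (n+1)) → ℕ) (D : ℕ → ℝ),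
      (∀ n l, 0 < c n l) ∧ (∀ n l, 0 < r n l) ∧
      (∀ n x, ctr (fun l => (r n l : ℂ)) (φ n x) = ctr (fun l => (s n l : ℂ)) x) ∧
      (∀ n x, φ (n+1) (i n x) = ψ n (φ n x)) ∧
      (∀ n x, ctr (fun l => (r (n+1) l : ℂ)) (ψ n x) = ctr (fun l => (r n l : ℂ)) x) ∧
      (∀ n x m, (ψ n x m).trace = ∑ l, (N n l m : ℂ) * (x l).trace) ∧
      (∀ n l m, 0 < N n l m) ∧ (∀ n, 0 < D n) ∧
      ∀ n l m, |N n l m - D n * r n l| ≤ (1 / ((n : ℝ) + 2)) * (D n * r n l) := by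
  have hstep : ∀ n (S : Stg (κ n) (s n)), ∃ (S' : Stg (κ (n+1)) (s (n+1))) (ψ : MA S.c →⋆ₐ[ℂ] MA S'.c)
      (N : Fin S.kc → Fin S'.kc → ℕ) (D : ℝ), 
      (∀ x, S'.φ (i n x) = ψ (S.φ x)) ∧
      (∀ x, ctr (fun l => (S'.r l : ℂ)) (ψ x) = ctr (fun l => (S.r l : ℂ)) x) ∧
      (∀ x m, (ψ x m).trace = ∑ l, (N l m : ℂ) * (x l).trace) ∧
      (∀ l m, 0 < N l m) ∧ (0 < D) ∧
      ∀ l m, |N l m - D * S.r l| ≤ (1 / ((n : ℝ) + 2)) * (D * S.r l) := by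
    intro n S
    have hk : 0 < S.kc := by
      rcases Nat.eq_zero_or_pos S.kc with h | h
      · exfalso
        have e := S.hφ 1
        rw [h1, ctr_apply] at e
        have : IsEmpty (Fin S.kc) := by rw [h]; infer_instance
        simp at e
      · exact h
    obtain ⟨k2, c2, r2, φ', ψ, N, D, a1, a2, a3, a4, a5, a6, a7, a8, a9⟩ :=
      step (hκ n) S.hc hk (i n) S.φ (s (n+1)) (hs (n+1)) S.r S.hr
        (fun x => by rw [S.hφ, hcs]) (1 / ((n : ℝ) + 2)) (by positivity)
    exact ⟨⟨k2, c2, r2, φ', a1, a2, a4⟩, ψ, N, D, a3, a5, a6, a7, a8, a9⟩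
  choose F ψ N D b1 b2 b3 b4 b5 b6 using hstep
  let T : ∀ n, Stg (κ n) (s n) := fun n => Nat.rec
    ⟨k 0, κ 0, s 0, StarAlgHom.id ℂ _, hκ 0, hs 0, fun x => rfl⟩ (fun n S => F n S) n
  exact ⟨fun n => (T n).kc, fun n => (T n).c, fun n => (T n).r, fun n => (T n).φ, fun n => ψ n (T n),
    fun n => N n (T n), fun n => D n (T n), fun n => (T n).hc, fun n => (T n).hr, fun n => (T n).hφ,
    fun n => b1 n (T n), fun n => b2 n (T n), fun n => b3 n (T n), fun n => b4 n (T n),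
    fun n => b5 n (T n), fun n => b6 n (T n)⟩

theorem ctr_faith {k : ℕ} {κ : Fin k → ℕ} (r : Fin k → ℝ) (hr : ∀ l, 0 < r l) (x : MA κ)
    (h : ctr (fun l => (r l : ℂ)) (star x * x) = 0) : x = 0 := by
  rw [ctr_apply, Finset.sum_eq_zero_iff_of_nonneg] at h
  · ext1 l
    have := h l (Finset.mem_univ _)
    rw [mul_eq_zero, or_iff_right (by exact_mod_cast (hr l).ne')] at this
    exact Matrix.trace_conjTranspose_mul_self_eq_zero_iff.1 this
  · intro l _
    exact mul_nonneg (by exact_mod_cast (hr l).le) (tr_pos (x l))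

theorem inj_of_ctr {k : ℕ} {κ : Fin k → ℕ} (r : Fin k → ℝ) (hr : ∀ l, 0 < r l) 
    {k' : ℕ} {κ' : Fin k' → ℕ} (w : Fin k' → ℂ) (f : MA κ →⋆ₐ[ℂ] MA κ')
    (h : ∀ x, ctr w (f x) = ctr (fun l => (r l : ℂ)) x) : Function.Injective f := by
  rw [injective_iff_map_eq_zero]
  intro x hx
  refine ctr_faith r hr x ?_
  rw [← h, map_mul, hx, mul_zero, map_zero]

theorem lim_unique {L : Type} [CStarAlgebra L] {k : ℕ → ℕ} {c : ∀ n, Fin (k n) → ℕ} (hc : ∀ n l, 0 < c n l)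
    (r : ∀ n, Fin (k n) → ℝ) (hr : ∀ n l, 0 < r n l)
    (ψ : ∀ n, MA (c n) →⋆ₐ[ℂ] MA (c (n+1))) (N : ∀ n, Fin (k n) → Fin (k (n+1)) → ℕ) (D : ℕ → ℝ)
    (hD : ∀ n, 0 < D n)
    (hN : ∀ n l m, |N n l m - D n * r n l| ≤ (1 / ((n : ℝ) + 2)) * (D n * r n l))
    (htr : ∀ n x m, (ψ n x m).trace = ∑ l, (N n l m : ℂ) * (x l).trace)
    (h1 : ∀ n, ctr (fun l => (r n l : ℂ)) (1 : MA (c n)) = 1)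
    (hψr : ∀ n x, ctr (fun l => (r (n+1) l : ℂ)) (ψ n x) = ctr (fun l => (r n l : ℂ)) x)
    (ι : ∀ n, MA (c n) →⋆ₐ[ℂ] L) (hι : ∀ n x, ‖ι n x‖ = ‖x‖) (hc' : ∀ n x, ι (n+1) (ψ n x) = ι n x)
    (σ : L →ₗ[ℂ] ℂ) (hσ : TrS L σ) (n : ℕ) (x : MA (c n)) : σ (ι n x) = ctr (fun l => (r n l : ℂ)) x := by
  obtain ⟨s1, s2, s3⟩ := hσ
  have hv : ∀ n l, ∃ v : ℝ, 0 ≤ v ∧ (v : ℂ) = σ (ι n (EE l ⟨0, hc n l⟩ ⟨0, hc n l⟩)) := by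
    intro n l
    have hp := EE_proj (κ := c n) l ⟨0, hc n l⟩
    have := s2 (ι n (EE l ⟨0, hc n l⟩ ⟨0, hc n l⟩))
    rw [← map_star, ← map_mul, hp.1, hp.2] at this
    obtain ⟨q1, q2⟩ := Complex.nonneg_iff.1 this
    exact ⟨_, q1, Complex.ext (by simp) (by simpa using q2)⟩
  choose v hv0 hv using hv
  have hform : ∀ n x, σ (ι n x) = ctr (fun l => (v n l : ℂ)) x := by
    intro n x
    have := tracial_form (hc n) (σ ∘ₗ (ι n).toLinearMap) (fun x y => by simp [map_mul, s3 (ι n x)])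
    have e := LinearMap.congr_fun this x
    refine e.trans ?_
    congr 2; ext l; exact (hv n l).symm
  have hvN : ∀ n l, v n l = ∑ m, (N n l m : ℝ) * v (n+1) m := by
    intro n l
    have e := hv n l
    rw [← hc', hform, ctr_apply] at e
    simp only [htr, EE_trace, mul_ite, mul_one, mul_zero, Finset.sum_ite_eq, Finset.mem_univ, if_true] at e
    have e' : ((v n l : ℝ) : ℂ) = ((∑ m, v (n+1) m * (N n l m : ℝ) : ℝ) : ℂ) := by rw [e]; push_cast; rfl
    rw [Complex.ofReal_inj.1 e']
    exact Finset.sum_congr rfl fun m _ => mul_comm _ _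
  have hsum1 : ∀ n, ∑ l, r n l * c n l = 1 := by
    intro n
    have := h1 n
    simp only [ctr_apply, Pi.one_apply, Matrix.trace_one, Fintype.card_fin] at this
    exact_mod_cast this
  have hsum2 : ∀ n, ∑ l, v n l * c n l = 1 := by
    intro n
    have := hform n 1
    rw [map_one, s1] at this
    simp only [ctr_apply, Pi.one_apply, Matrix.trace_one, Fintype.card_fin] at this
    exact_mod_cast this.symm
  have hest : ∀ n l, |v n l - r n l| ≤ 4 * (1 / ((n:ℝ)+2)) * r n l := by
    intro n
    set ε : ℝ := 1 / ((n:ℝ)+2) with hε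
    have hε0 : 0 < ε := by positivity
    have hε1 : ε ≤ 1/2 := by
      rw [hε]; exact one_div_le_one_div_of_le (by norm_num) (by linarith [(Nat.cast_nonneg n : (0:ℝ) ≤ n)])
    obtain ⟨T, hT⟩ : ∃ T, T = D n * ∑ m, v (n+1) m := ⟨_, rfl⟩
    have hT0 : 0 ≤ T := by
      rw [hT]; exact mul_nonneg (hD n).le (Finset.sum_nonneg fun m _ => hv0 _ m)
    have e1 : ∀ l, |v n l - r n l * T| ≤ ε * (r n l * T) := by
      intro l
      have : v n l - r n l * T = ∑ m, ((N n l m : ℝ) - D n * r n l) * v (n+1) m := by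
        rw [hvN, hT, Finset.mul_sum, Finset.mul_sum, ← Finset.sum_sub_distrib]
        exact Finset.sum_congr rfl fun m _ => by ring
      rw [this]
      refine (Finset.abs_sum_le_sum_abs _ _).trans ?_
      have : ε * (r n l * T) = ∑ m, (ε * (D n * r n l)) * v (n+1) m := by
        rw [← Finset.mul_sum, hT]; ring
      rw [this]
      refine Finset.sum_le_sum fun m _ => ?_
      rw [abs_mul, abs_of_nonneg (hv0 (n+1) m)]
      exact mul_le_mul_of_nonneg_right (hN n l m) (hv0 _ _)
    have e2 : |1 - T| ≤ ε * T := by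
      have a : 1 - T = ∑ l, (v n l - r n l * T) * c n l := by
        have : ∑ l, (v n l - r n l * T) * c n l = ∑ l, v n l * c n l - (∑ l, r n l * c n l) * T := by
          rw [Finset.sum_mul, ← Finset.sum_sub_distrib]
          exact Finset.sum_congr rfl fun m _ => by ring
        rw [this, hsum1, hsum2, one_mul]
      have b : ε * T = ∑ l, (ε * (r n l * T)) * c n l := by
        have : ∑ l, (ε * (r n l * T)) * c n l = ε * T * ∑ l, r n l * c n l := by
          rw [Finset.mul_sum]
          exact Finset.sum_congr rfl fun m _ => by ring
        rw [this, hsum1, mul_one]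
      rw [a, b]
      refine (Finset.abs_sum_le_sum_abs _ _).trans (Finset.sum_le_sum fun l _ => ?_)
      rw [abs_mul, abs_of_nonneg (Nat.cast_nonneg (c n l) : (0:ℝ) ≤ c n l)]
      exact mul_le_mul_of_nonneg_right (e1 l) (Nat.cast_nonneg _)
    have hT2 : T ≤ 2 := by
      have := (abs_le.1 e2).1
      nlinarith
    have e3 : |T - 1| ≤ 2 * ε := by
      rw [abs_sub_comm]; refine e2.trans ?_; nlinarith
    intro l
    have e4 : v n l - r n l = (v n l - r n l * T) + r n l * (T - 1) := by ring
    rw [e4]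
    refine (abs_add_le _ _).trans ?_
    rw [abs_mul, abs_of_pos (hr n l)]
    have e5 : ε * (r n l * T) ≤ 2 * ε * r n l := by
      have := mul_le_mul_of_nonneg_left hT2 (mul_pos hε0 (hr n l)).le
      linarith
    have e6 := mul_le_mul_of_nonneg_left e3 (hr n l).le
    have := e1 l
    linarith
  have hbound : ∀ n (x : MA (c n)), ‖σ (ι n x) - ctr (fun l => (r n l : ℂ)) x‖ ≤ 4 * (1 / ((n:ℝ)+2)) * ‖x‖ := by
    intro n x
    rw [hform, ctr_apply, ctr_apply, ← Finset.sum_sub_distrib]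
    have b : 4 * (1 / ((n:ℝ)+2)) * ‖x‖ = ∑ l, (4 * (1 / ((n:ℝ)+2)) * r n l) * (c n l * ‖x‖) := by
      have : ∑ l, (4 * (1 / ((n:ℝ)+2)) * r n l) * (c n l * ‖x‖) = 4 * (1 / ((n:ℝ)+2)) * ‖x‖ * ∑ l, r n l * c n l := by
        rw [Finset.mul_sum]
        exact Finset.sum_congr rfl fun m _ => by ring
      rw [this, hsum1, mul_one]
    rw [b]
    refine (norm_sum_le _ _).trans (Finset.sum_le_sum fun l _ => ?_)
    rw [← sub_mul, norm_mul, ← Complex.ofReal_sub, Complex.norm_real, Real.norm_eq_abs]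
    refine mul_le_mul (hest n l) ?_ (norm_nonneg _) (by have := (hr n l).le; positivity)
    exact (tr_le (x l)).trans (mul_le_mul_of_nonneg_left (norm_le_pi_norm x l) (Nat.cast_nonneg _))
  have hup : ∀ m, n ≤ m → ∃ y : MA (c m), ι m y = ι n x ∧
      ctr (fun l => (r m l : ℂ)) y = ctr (fun l => (r n l : ℂ)) x ∧ ‖y‖ = ‖x‖ := by
    intro m h
    induction m, h using Nat.le_induction with
    | base => exact ⟨x, rfl, rfl, rfl⟩
    | succ m hm ih =>
      obtain ⟨y, h1, h2, h3⟩ := ih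
      refine ⟨ψ m y, by rw [hc', h1], by rw [hψr, h2], ?_⟩
      rw [← hι, hc', h1, hι]
  have hlim : Filter.Tendsto (fun m : ℕ => 4 * (1 / ((m:ℝ)+2)) * ‖x‖) Filter.atTop (nhds 0) := by
    have h0 : Filter.Tendsto (fun m : ℕ => (1 / ((m:ℝ)+2))) Filter.atTop (nhds 0) := by
      have := (tendsto_one_div_add_atTop_nhds_zero_nat (𝕜 := ℝ)).comp (Filter.tendsto_add_atTop_nat 1)
      refine this.congr fun m => ?_
      simp only [Function.comp]; push_cast; ring_nf
    have := (h0.const_mul 4).mul_const ‖x‖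
    simpa using this
  have := ge_of_tendsto hlim (Filter.eventually_atTop.2 ⟨n, fun m hm => by
    obtain ⟨y, h1, h2, h3⟩ := hup m hm
    have := hbound m y
    rw [h1, h2, h3] at this
    exact this⟩)
  rw [← sub_eq_zero, ← norm_eq_zero]
  exact le_antisymm this (norm_nonneg _)

end Part9

section Part10
open scoped ComplexOrder
open scoped Matrix.Norms.L2Operator

theorem ext_lim {B L : Type} [CStarAlgebra B] [CStarAlgebra L] {C : ℕ → Type} [∀ n, CStarAlgebra (C n)]
    (j : ∀ n, C n →⋆ₐ[ℂ] B) (θ : ∀ n, C n →⋆ₐ[ℂ] L) (i : ∀ n, C n →⋆ₐ[ℂ] C (n+1))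
    (hj : ∀ n x, ‖j n x‖ = ‖x‖) (hθ : ∀ n x, ‖θ n x‖ = ‖x‖)
    (cj : ∀ n x, j (n+1) (i n x) = j n x) (cθ : ∀ n x, θ (n+1) (i n x) = θ n x)
    (hd : Dense (⋃ n, Set.range (j n))) :
    ∃ Θ : B →⋆ₙₐ[ℂ] L, Function.Injective Θ := by
  have hmm : ∀ n m, n ≤ m → ∀ x, ∃ y, j m y = j n x ∧ θ m y = θ n x := by
    intro n m h x
    induction m, h using Nat.le_induction with
    | base => exact ⟨x, rfl, rfl⟩
    | succ m hm' ih =>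
      obtain ⟨y, hy, hy'⟩ := ih
      exact ⟨i m y, (cj _ _).trans hy, (cθ _ _).trans hy'⟩
  let S : Submodule ℂ (B × L) :=
    { carrier := {p | ∃ n x, p = (j n x, θ n x)}
      add_mem' := by
        rintro _ _ ⟨n, x, rfl⟩ ⟨m, y, rfl⟩
        obtain ⟨x', a1, a2⟩ := hmm n (max n m) (le_max_left _ _) x
        obtain ⟨y', b1, b2⟩ := hmm m (max n m) (le_max_right _ _) y
        refine ⟨max n m, x' + y', ?_⟩
        rw [map_add, map_add, a1, a2, b1, b2]; rfl
      zero_mem' := ⟨0, 0, by rw [map_zero, map_zero]; rfl⟩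
      smul_mem' := by
        rintro c _ ⟨n, x, rfl⟩
        exact ⟨n, c • x, by rw [map_smul, map_smul]; rfl⟩ }
  let e : S →ₗ[ℂ] B := LinearMap.fst ℂ B L ∘ₗ S.subtype
  let f : S →ₗ[ℂ] L := LinearMap.snd ℂ B L ∘ₗ S.subtype
  have hde : DenseRange e := by
    refine hd.mono ?_
    intro b hb
    obtain ⟨n, x, rfl⟩ := Set.mem_iUnion.1 hb
    exact ⟨⟨(j n x, θ n x), n, x, rfl⟩, rfl⟩
  have hn : ∃ C, ∀ x, ‖f x‖ ≤ C * ‖e x‖ := by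
    refine ⟨1, ?_⟩
    rintro ⟨_, n, x, rfl⟩
    change ‖θ n x‖ ≤ 1 * ‖j n x‖
    rw [hj, hθ, one_mul]
  let T := f.extendOfNorm e
  have hT : ∀ n x, T (j n x) = θ n x := fun n x =>
    LinearMap.extendOfNorm_eq hde hn ⟨(j n x, θ n x), n, x, rfl⟩
  have hTc : Continuous T := T.continuous
  have hnorm : ∀ b, ‖T b‖ = ‖b‖ := by
    have hcl : IsClosed {b | ‖T b‖ = ‖b‖} := isClosed_eq (by fun_prop) (by fun_prop)
    have := closure_minimal (s := ⋃ n, Set.range (j n)) (h₂ := hcl) (by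
      intro b hb
      obtain ⟨n, x, rfl⟩ := Set.mem_iUnion.1 hb
      change ‖T (j n x)‖ = _
      rw [hT, hj, hθ])
    intro b; exact this (hd b)
  have hstar : ∀ b, T (star b) = star (T b) := by
    have hcl : IsClosed {b | T (star b) = star (T b)} := isClosed_eq (by fun_prop) (by fun_prop)
    have := closure_minimal (s := ⋃ n, Set.range (j n)) (h₂ := hcl) (by
      intro b hb
      obtain ⟨n, x, rfl⟩ := Set.mem_iUnion.1 hb
      change T (star (j n x)) = _
      rw [← map_star, hT, hT, map_star])
    intro b; exact this (hd b)
  have hmul : ∀ p : B × B, T (p.1 * p.2) = T p.1 * T p.2 := by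
    have hcl : IsClosed {p : B × B | T (p.1 * p.2) = T p.1 * T p.2} :=
      isClosed_eq (by fun_prop) (by fun_prop)
    have := closure_minimal (s := (⋃ n, Set.range (j n)) ×ˢ (⋃ n, Set.range (j n))) (h₂ := hcl) (by
      rintro ⟨a, b⟩ ⟨ha, hb⟩
      obtain ⟨n, x, rfl⟩ := Set.mem_iUnion.1 ha
      obtain ⟨m, y, rfl⟩ := Set.mem_iUnion.1 hb
      obtain ⟨x', a1, a2⟩ := hmm n (max n m) (le_max_left _ _) x
      obtain ⟨y', b1, b2⟩ := hmm m (max n m) (le_max_right _ _) y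
      change T (j n x * j m y) = T (j n x) * T (j m y)
      rw [← a1, ← b1, ← map_mul, hT, hT, hT, map_mul])
    intro p; exact this ((hd.prod hd) p)
  refine ⟨{ toFun := T, map_smul' := fun c x => T.map_smul c x, map_zero' := map_zero T,
            map_add' := map_add T, map_mul' := fun a b => hmul (a, b), map_star' := hstar }, ?_⟩
  intro a b hab
  have hab' : T a = T b := hab
  have := hnorm (a - b)
  rw [map_sub, hab', sub_self, norm_zero] at this
  exact sub_eq_zero.1 (norm_eq_zero.1 this.symm)

end Part10

section Part11
open scoped ComplexOrder
open scoped Matrix.Norms.L2Operator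

theorem main_nt {B : Type} [CStarAlgebra B] [Nontrivial B] (S : ℕ → StarSubalgebra ℂ B) (hm : Monotone S)
    (hf : ∀ n, FiniteDimensional ℂ (S n)) (hd : Dense (⋃ n, (S n : Set B)))
    (hs : ∀ I : TwoSidedIdeal B, IsClosed (I : Set B) → I = ⊥ ∨ I = ⊤) :
    ∃ (L : Type) (_ : CStarAlgebra L) (Θ : B →⋆ₙₐ[ℂ] L), Function.Injective Θ ∧
      (∃ S : ℕ → StarSubalgebra ℂ L,
        Monotone S ∧ (∀ n, FiniteDimensional ℂ (S n)) ∧ Dense (⋃ n, (S n : Set L))) ∧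
      (∀ I : TwoSidedIdeal L, IsClosed (I : Set L) → I = ⊥ ∨ I = ⊤) ∧
      ∃! τ : L →ₗ[ℂ] ℂ, TrS L τ := by
  obtain ⟨k, κ, j, i, hκ, hj, cj, hdj⟩ := af_pres S hm hf hd
  obtain ⟨τ, hτ⟩ := exists_trace k κ j hκ hj (fun n x => ⟨i n x, cj n x⟩) hdj
  have hv : ∀ n l, ∃ v : ℝ, 0 < v ∧ (v : ℂ) = τ (j n (EE l ⟨0, hκ n l⟩ ⟨0, hκ n l⟩)) := by
    intro n l
    have hp := EE_proj (κ := κ n) l ⟨0, hκ n l⟩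
    have h2 := hτ.2.1 (j n (EE l ⟨0, hκ n l⟩ ⟨0, hκ n l⟩))
    have h3 := trs_faith hs hτ (j n (EE l ⟨0, hκ n l⟩ ⟨0, hκ n l⟩))
    rw [← map_star, ← map_mul, hp.1, hp.2] at h2 h3
    obtain ⟨q1, q2⟩ := Complex.nonneg_iff.1 h2
    have q3 : ((τ (j n (EE l ⟨0, hκ n l⟩ ⟨0, hκ n l⟩))).re : ℂ) = τ (j n (EE l ⟨0, hκ n l⟩ ⟨0, hκ n l⟩)) := by
      apply Complex.ext <;> simp [← q2]
    refine ⟨_, lt_of_le_of_ne q1 ?_, q3⟩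
    intro h0
    rw [← h0, Complex.ofReal_zero] at q3
    have h4 := h3 q3.symm
    rw [← map_zero (j n)] at h4
    have h5 := congrArg (fun x => ctr (fun _ => (1 : ℂ)) x) (hj n h4)
    simp only [ctr_EE, map_zero] at h5
    exact one_ne_zero h5
  choose s hs0 hsv using hv
  have hform : ∀ n x, τ (j n x) = ctr (fun l => (s n l : ℂ)) x := by
    intro n x
    have := tracial_form (hκ n) (τ ∘ₗ (j n).toLinearMap) (fun x y => by
      change τ (j n (x * y)) = τ (j n (y * x))
      rw [map_mul (j n), map_mul (j n), hτ.2.2])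
    have h2 := congrArg (fun g => g x) this
    simp only [hsv]
    exact h2
  have hcs : ∀ n x, ctr (fun l => (s (n+1) l : ℂ)) (i n x) = ctr (fun l => (s n l : ℂ)) x := by
    intro n x; rw [← hform, ← hform, cj]
  have h1 : ∀ n, ctr (fun l => (s n l : ℂ)) (1 : MA (κ n)) = 1 := by
    intro n; rw [← hform, map_one, hτ.1]
  obtain ⟨kc, c, r, φ, ψ, N, D, t1, t2, t3, t4, t5, t6, t7, t8, t9⟩ := tower hκ i s hs0 hcs h1
  have hψ : ∀ n x, ‖ψ n x‖ = ‖x‖ := fun n =>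
    NonUnitalStarAlgHom.norm_map (ψ n) (inj_of_ctr (r n) (t2 n) _ (ψ n) (t5 n))
  have hφ : ∀ n x, ‖φ n x‖ = ‖x‖ := fun n =>
    NonUnitalStarAlgHom.norm_map (φ n) (inj_of_ctr (s n) (hs0 n) _ (φ n) (t3 n))
  have h1' : ∀ n, ctr (fun l => (r n l : ℂ)) (1 : MA (c n)) = 1 := by
    intro n; rw [← map_one (φ n), t3, h1]
  obtain ⟨L, iL, ι, hι, hc', hdι⟩ := indlim hψ
  have hιi : ∀ n, Function.Injective (ι n) := fun n => by
    rw [injective_iff_map_eq_zero]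
    intro x hx
    rw [← norm_eq_zero, ← hι, hx, norm_zero]
  haveI : Nontrivial L := by
    refine ⟨⟨1, 0, ?_⟩⟩
    intro h
    rw [← map_one (ι 0), ← map_zero (ι 0)] at h
    have h2 := h1' 0
    rw [hιi 0 h, map_zero] at h2
    exact zero_ne_one h2
  obtain ⟨Θ, hΘ⟩ := ext_lim j (fun n => (ι n).comp (φ n)) i
    (fun n => NonUnitalStarAlgHom.norm_map (j n) (hj n))
    (fun n x => (hι n (φ n x)).trans (hφ n x)) cj
    (fun n x => by
      change ι (n+1) (φ (n+1) (i n x)) = ι n (φ n x)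
      rw [t4, hc']) hdj
  refine ⟨L, iL, Θ, hΘ, ⟨fun n => (ι n).range, ?_, ?_, ?_⟩, fun I _ => lim_simple t1 ψ N t7 t6 ι hι hc' hdι I, ?_⟩
  · refine monotone_nat_of_le_succ fun n => ?_
    rintro _ ⟨x, rfl⟩
    exact ⟨ψ n x, hc' n x⟩
  · intro n
    exact LinearMap.finiteDimensional_range (ι n).toLinearMap
  · exact hdι
  · obtain ⟨σ, hσ⟩ := exists_trace kc c ι t1 hιi (fun n x => ⟨ψ n x, hc' n x⟩) hdι
    refine ⟨σ, hσ, fun ρ hρ => ?_⟩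
    apply LinearMap.ext
    intro b
    have := Continuous.ext_on hdι (trs_cont hρ.2.1) (trs_cont hσ.2.1) (by
      intro y hy
      obtain ⟨n, x, rfl⟩ := Set.mem_iUnion.1 hy
      rw [lim_unique t1 r t2 ψ N D t8 t9 t6 h1' t5 ι hι hc' ρ hρ,
        lim_unique t1 r t2 ψ N D t8 t9 t6 h1' t5 ι hι hc' σ hσ])
    exact congrFun this b

end Part11

/-- If a unital separable C*-algebra embeds into a unital simple AF-algebra, then it
embeds into a unital simple AF-algebra having exactly one tracial state. -/
theorem stmt_1 {A : Type*} [NormedRing A] [StarRing A] [CStarRing A] [NormedAlgebra ℂ A]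
    [StarModule ℂ A] [CompleteSpace A] [TopologicalSpace.SeparableSpace A]
    (h : ∃ (B : UnitalCStarAlg) (φ : A →⋆ₙₐ[ℂ] B.carrier),
      Function.Injective φ ∧ B.IsAF ∧ B.IsSimple) :
    ∃ (B : UnitalCStarAlg) (φ : A →⋆ₙₐ[ℂ] B.carrier),
      Function.Injective φ ∧ B.IsAF ∧ B.IsSimple ∧
        ∃! τ : B.carrier →ₗ[ℂ] ℂ, B.IsTracialState τ := by
  obtain ⟨B, φ, hφ, ⟨S, hm, hf, hd⟩, hs⟩ := h
  letI : CStarAlgebra B.carrier := {}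
  by_cases hB : Nontrivial B.carrier
  · obtain ⟨L, iL, Θ, hΘ, haf, hsi, htr⟩ := main_nt S hm hf hd hs
    exact ⟨⟨L⟩, Θ.comp φ, hΘ.comp hφ, haf, hsi, htr⟩
  · have hsB : Subsingleton B.carrier := not_nontrivial_iff_subsingleton.1 hB
    have hsA : Subsingleton A := hφ.subsingleton
    refine ⟨⟨ℂ⟩, 0, fun a b _ => Subsingleton.elim a b, ⟨fun _ => ⊤, fun _ _ _ => le_rfl, ?_, ?_⟩, ?_, ?_⟩
    · intro n
      exact inferInstanceAs (FiniteDimensional ℂ (⊤ : Submodule ℂ ℂ))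
    · intro x
      apply subset_closure
      exact Set.mem_iUnion.2 ⟨0, trivial⟩
    · intro I _
      exact eq_bot_or_eq_top (α := TwoSidedIdeal ℂ) I
    · refine ⟨LinearMap.id, ⟨rfl, ?_, ?_⟩, ?_⟩
      · intro a
        exact star_mul_self_nonneg (R := ℂ) a
      · intro a b
        exact mul_comm (G := ℂ) a b
      · intro ρ hρ
        have h1 : ρ (1 : ℂ) = 1 := hρ.1
        exact LinearMap.ext_ring (R := ℂ) (M₃ := ℂ) h1
end
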